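/- arXiv:2302.07105 — 12 statements merged into one kernel-verified Lean document; each statement's English description precedes it below -/
import Mathlib

section
/- Let T > 0, k ≥ 2 an integer, α ∈ (0,1], and let f ∈ C^{k,α}[0,T] satisfy f ≥ 0 on [0,T] and have at least one zero in [0,T]. Assume that f'(x) = f''(x) = ⋯ = f^{(k)}(x) = 0 whenever x ∈ [0,T] and f(x) = 0. Then for every μ ∈ (1/(k+α), 1) the function f^μ is differentiable at every point of [0,T]. -/
/-!
Only the zeros of `f` need attention: where `f > 0`, the function `f ^ μ` is a composition of
differentiable functions. At a zero `x₀` all derivatives of order at most `k` vanish, so integrating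
the Hölder bound on the `k`-th derivative `k` times (each step by the mean value inequality,
`iteratedDerivWithin_flat`) gives `f x ≤ C |x - x₀| ^ (k + α)`. Hence
`f x ^ μ ≤ C ^ μ |x - x₀| ^ ((k + α) μ)` with `(k + α) μ > 1`, and `f ^ μ` has derivative `0` at `x₀`
(`hasDerivWithinAt_zero_of_abs_le_rpow`).
-/

/-- A function that is `O(|x - x₀| ^ p)` with a real exponent `p > 1` has derivative zero
at `x₀`. -/
lemma hasDerivWithinAt_zero_of_abs_le_rpow {g : ℝ → ℝ} {s : Set ℝ} {x₀ K p : ℝ}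
    (hp : 1 < p) (h₀ : g x₀ = 0) (h : ∀ x ∈ s, |g x| ≤ K * |x - x₀| ^ p) :
    HasDerivWithinAt g 0 s x₀ := by
  rw [hasDerivWithinAt_iff_tendsto]
  have hlim : Filter.Tendsto (fun x => K * |x - x₀| ^ (p - 1)) (nhdsWithin x₀ s) (nhds 0) := by
    have hc : Continuous fun x : ℝ => K * |x - x₀| ^ (p - 1) :=
      continuous_const.mul
        ((continuous_id.sub continuous_const).abs.rpow_const fun _ => Or.inr (by linarith))
    have := (hc.tendsto x₀).mono_left (nhdsWithin_le_nhds (s := s))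
    simpa [Real.zero_rpow (by linarith : p - 1 ≠ 0)] using this
  refine squeeze_zero' (Filter.Eventually.of_forall fun x => by positivity) ?_ hlim
  filter_upwards [self_mem_nhdsWithin] with x hx
  simp only [h₀, sub_zero, smul_zero, Real.norm_eq_abs]
  rcases eq_or_ne x x₀ with rfl | hne
  · simp [Real.zero_rpow (by linarith : p - 1 ≠ 0)]
  · have hpos : 0 < |x - x₀| := abs_pos.mpr (sub_ne_zero.mpr hne)
    rw [inv_mul_le_iff₀ hpos]
    calc |g x| ≤ K * |x - x₀| ^ p := h x hx
      _ = |x - x₀| * (K * |x - x₀| ^ (p - 1)) := by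
        rw [Real.rpow_sub_one hpos.ne']
        field_simp

/-- If all derivatives of order at most `k` vanish at `x₀` and the `k`-th one is `O(|x - x₀| ^ α)`,
then the derivative of order `k - j` is `O(|x - x₀| ^ (j + α))`, with the same constant. -/
lemma iteratedDerivWithin_flat {f : ℝ → ℝ} {T C α x₀ : ℝ} {k : ℕ} (hT : 0 < T) (hα : 0 < α)
    (hC : 0 ≤ C) (hf : ContDiffOn ℝ k f (Set.Icc 0 T)) (hx₀ : x₀ ∈ Set.Icc 0 T)
    (hvan : ∀ i ≤ k, iteratedDerivWithin i f (Set.Icc 0 T) x₀ = 0)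
    (hk : ∀ x ∈ Set.Icc 0 T, |iteratedDerivWithin k f (Set.Icc 0 T) x| ≤ C * |x - x₀| ^ α)
    (j : ℕ) (hj : j ≤ k) :
    ∀ x ∈ Set.Icc 0 T,
      |iteratedDerivWithin (k - j) f (Set.Icc 0 T) x| ≤ C * |x - x₀| ^ ((j : ℝ) + α) := by
  induction j with
  | zero => simpa using hk
  | succ j ih =>
    intro x hx
    have hsub : Set.uIcc x₀ x ⊆ Set.Icc 0 T := Set.ordConnected_Icc.uIcc_subset hx₀ hx
    have hidx : k - j = k - (j + 1) + 1 := by omega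
    have hder : ∀ y ∈ Set.uIcc x₀ x,
        HasDerivWithinAt (iteratedDerivWithin (k - (j + 1)) f (Set.Icc 0 T))
          (iteratedDerivWithin (k - j) f (Set.Icc 0 T) y) (Set.uIcc x₀ x) y := by
      intro y hy
      rw [hidx, iteratedDerivWithin_succ]
      have hd := hf.differentiableOn_iteratedDerivWithin (m := k - (j + 1))
        (by exact_mod_cast (by omega : k - (j + 1) < k)) (uniqueDiffOn_Icc hT)
      exact (hd y (hsub hy)).hasDerivWithinAt.mono hsub
    have hbd : ∀ y ∈ Set.uIcc x₀ x,
        ‖iteratedDerivWithin (k - j) f (Set.Icc 0 T) y‖ ≤ C * |x - x₀| ^ ((j : ℝ) + α) := by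
      intro y hy
      refine (ih (by omega) y (hsub hy)).trans ?_
      have := Set.abs_sub_left_of_mem_uIcc hy
      gcongr
    have hmv := (convex_uIcc x₀ x).norm_image_sub_le_of_norm_hasDerivWithin_le hder hbd
      Set.left_mem_uIcc Set.right_mem_uIcc
    rw [hvan _ (Nat.sub_le _ _), sub_zero, Real.norm_eq_abs, Real.norm_eq_abs] at hmv
    refine hmv.trans_eq ?_
    rw [mul_assoc, ← Real.rpow_add_one' (abs_nonneg _) (by positivity)]
    congr 2
    push_cast
    ring


/-- If `f ∈ C^{k,α}[0,T]` is nonnegative, has a zero in `[0,T]`, and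
`f' = ⋯ = f^{(k)} = 0` at every zero of `f`, then `f^μ` is differentiable on `[0,T]`
for every `μ ∈ (1/(k+α), 1)`. -/
theorem pow_mu_differentiable
    (T : ℝ) (hT : 0 < T) (k : ℕ) (hk : 2 ≤ k) (α : ℝ) (hα : α ∈ Set.Ioc (0 : ℝ) 1)
    (f : ℝ → ℝ)
    (hf : ContDiffOn ℝ k f (Set.Icc 0 T))
    (hHolder : ∃ C : ℝ, ∀ x ∈ Set.Icc 0 T, ∀ y ∈ Set.Icc 0 T,
      |iteratedDerivWithin k f (Set.Icc 0 T) x - iteratedDerivWithin k f (Set.Icc 0 T) y|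
        ≤ C * |x - y| ^ α)
    (hf0 : ∀ x ∈ Set.Icc 0 T, 0 ≤ f x)
    (hzero : ∃ x ∈ Set.Icc 0 T, f x = 0)
    (hvanish : ∀ x ∈ Set.Icc 0 T, f x = 0 → ∀ j : ℕ, 1 ≤ j → j ≤ k →
      iteratedDerivWithin j f (Set.Icc 0 T) x = 0)
    (μ : ℝ) (hμ : μ ∈ Set.Ioo (1 / ((k : ℝ) + α)) 1) :
    ∀ x ∈ Set.Icc 0 T, DifferentiableWithinAt ℝ (fun t => f t ^ μ) (Set.Icc 0 T) x := by
  intro x₀ hx₀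
  by_cases hfx : f x₀ = 0
  · obtain ⟨C, hC⟩ := hHolder
    obtain ⟨hα0, -⟩ := hα
    obtain ⟨hμ1, -⟩ := hμ
    have hkα : 0 < (k : ℝ) + α := by positivity
    have hμ0 : 0 < μ := lt_trans (by positivity) hμ1
    have hp : 1 < ((k : ℝ) + α) * μ := by rwa [div_lt_iff₀' hkα] at hμ1
    have hvan : ∀ i ≤ k, iteratedDerivWithin i f (Set.Icc 0 T) x₀ = 0 := by
      intro i hi
      rcases Nat.eq_zero_or_pos i with rfl | hi0
      · simpa using hfx
      · exact hvanish x₀ hx₀ hfx i hi0 hi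
    -- The Hölder constant is not assumed nonnegative, hence `|C|`.
    have hbound : ∀ x ∈ Set.Icc 0 T,
        |iteratedDerivWithin k f (Set.Icc 0 T) x| ≤ |C| * |x - x₀| ^ α := by
      intro x hx
      have h := hC x hx x₀ hx₀
      rw [hvan k le_rfl, sub_zero] at h
      exact h.trans (by gcongr; exact le_abs_self C)
    have hflat := iteratedDerivWithin_flat hT hα0 (abs_nonneg C) hf hx₀ hvan hbound k le_rfl
    simp only [Nat.sub_self, iteratedDerivWithin_zero] at hflat
    refine (hasDerivWithinAt_zero_of_abs_le_rpow (K := |C| ^ μ) hp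
      (by simp [hfx, Real.zero_rpow hμ0.ne']) fun x hx => ?_).differentiableWithinAt
    rw [abs_of_nonneg (Real.rpow_nonneg (hf0 x hx) μ), Real.rpow_mul (abs_nonneg _),
      ← Real.mul_rpow (abs_nonneg _) (by positivity)]
    exact Real.rpow_le_rpow (hf0 x hx) ((le_abs_self _).trans (hflat x hx)) hμ0.le
  · have hd : DifferentiableWithinAt ℝ f (Set.Icc 0 T) x₀ :=
      hf.differentiableOn (by exact_mod_cast (by omega : k ≠ 0)) x₀ hx₀
    exact hd.rpow_const (Or.inl hfx)
end

section
/- Let T > 0, k ≥ 2 an integer, α ∈ (0,1], and let f ∈ C^{k,α}[0,T] satisfy f ≥ 0 on [0,T] and have at least one zero in [0,T]. Assume that f'(x) = ⋯ = f^{(k)}(x) = 0 whenever f(x) = 0, and that the quotient N(x,y)/D(x,y) is bounded for (x,y) ranging over {t ∈ [0,T] : f(t) = 0} × {t ∈ [0,T] : f(t) > 0}. Let μ ∈ (1/(k+α), 1) and set β = μ(k+α) − 1, and assume β ≤ 1. Then for every x ∈ [0,T] with f(x) = 0, the derivative (f^μ)' is Hölder continuous with exponent β at x. -/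
/-! Fix a zero `x` of `f` and put `A = k + α`. All derivatives of `f` of order at most `k` vanish
at `x`, so Taylor's formula with integral remainder (`taylor_flat`), applied to `f` and to `f'`,
shows that the numerator and the base of the power in the denominator of the bounded quotient are
constant multiples of `f' y` and `f y`. The hypothesis therefore says
`|f' y| ≤ K * f y ^ ((A - 1) / A)`. The same formula and the Hölder condition on the `k`-th
derivative give `f y ≤ C * |y - x| ^ A` (`flat_le`).

Where `f y > 0`, the chain rule gives
`|(f ^ μ)' y| = μ * f y ^ (μ - 1) * |f' y| ≤ μ * K * f y ^ (β / A) ≤ C' * |y - x| ^ β`.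
At a zero `z`, `f ^ μ` is `O(|t - z| ^ (1 + β))` with `β > 0`, so its derivative there is `0`
(`hasDerivWithinAt_zero_of_le`). In particular `(f ^ μ)' x = 0`, and the two cases combine. -/

open Set MeasureTheory intervalIntegral

/-- Taylor's formula with integral remainder at a point `x` where `g` and its first `m` derivatives
vanish. The remainder integral is rescaled to `[0, 1]`, so that it holds on either side of `x`. -/
theorem taylor_flat {T : ℝ} (hT : 0 < T) (m : ℕ) (g : ℝ → ℝ)
    (hg : ContDiffOn ℝ (m + 1 : ℕ) g (Icc 0 T)) {x y : ℝ} (hx : x ∈ Icc 0 T) (hy : y ∈ Icc 0 T)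
    (h0 : ∀ j ≤ m, iteratedDerivWithin j g (Icc 0 T) x = 0) :
    g y = (y - x) ^ (m + 1) / (m.factorial : ℝ) * ∫ s in (0:ℝ)..1, (1 - s) ^ m *
      iteratedDerivWithin (m + 1) g (Icc 0 T) (s * y + (1 - s) * x) := by
  have hu : UniqueDiffOn ℝ (Icc (0:ℝ) T) := uniqueDiffOn_Icc hT
  have hmaps : MapsTo (fun s : ℝ => s * y + (1 - s) * x) (uIcc (0:ℝ) 1) (Icc 0 T) := by
    intro s hs
    rw [uIcc_of_le zero_le_one] at hs
    exact (convex_Icc 0 T) hy hx hs.1 (by linarith [hs.2]) (by ring)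
  have hcont : ∀ j ≤ m + 1, ContinuousOn
      (fun s : ℝ => iteratedDerivWithin j g (Icc 0 T) (s * y + (1 - s) * x)) (uIcc (0:ℝ) 1) := by
    intro j hj
    exact (hg.continuousOn_iteratedDerivWithin (by exact_mod_cast hj) hu).comp
      (by fun_prop) hmaps
  have hder : ∀ j ≤ m, ∀ s ∈ (uIcc (0:ℝ) 1), HasDerivWithinAt
      (fun s : ℝ => iteratedDerivWithin j g (Icc 0 T) (s * y + (1 - s) * x))
      (iteratedDerivWithin (j + 1) g (Icc 0 T) (s * y + (1 - s) * x) * (y - x)) (uIcc (0:ℝ) 1) s := by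
    intro j hj s hs
    have h1 := (hg.differentiableOn_iteratedDerivWithin (m := j)
      (by exact_mod_cast Nat.lt_succ_of_le hj) hu _ (hmaps hs)).hasDerivWithinAt
    rw [← iteratedDerivWithin_succ] at h1
    have h2 : HasDerivWithinAt (fun s : ℝ => s * y + (1 - s) * x) (y - x) (uIcc (0:ℝ) 1) s := by
      have := ((hasDerivWithinAt_id s (uIcc (0:ℝ) 1)).mul_const y).add
        (((hasDerivWithinAt_id s (uIcc (0:ℝ) 1)).const_sub 1).mul_const x)
      convert! this using 1
      ring
    exact h1.comp s h2 hmaps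
  induction m with
  | zero =>
    have := integral_eq_sub_of_hasDeriv_right (hcont 0 (by omega))
      (fun s hs => ((hder 0 le_rfl s (Ioo_subset_Icc_self hs)).hasDerivAt
        (Icc_mem_nhds hs.1 hs.2)).hasDerivWithinAt)
      ((hcont 1 le_rfl).mul continuousOn_const).intervalIntegrable
    have h0' := h0 0 le_rfl
    simp only [iteratedDerivWithin_zero] at this h0'
    rw [intervalIntegral.integral_mul_const] at this
    simp [h0'] at this
    simp [← this, mul_comm]
  | succ m ih =>
    have ih := ih (hg.of_le (by exact_mod_cast Nat.le_succ _)) (fun j hj => h0 j (by omega))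
      (fun j hj => hcont j (by omega)) (fun j hj => hder j (by omega))
    have hm : ((m:ℝ) + 1) ≠ 0 := by positivity
    have hparts := integral_mul_deriv_eq_deriv_mul_of_hasDerivWithinAt
      (a := (0:ℝ)) (b := 1) (hder (m + 1) le_rfl)
      (v := fun s : ℝ => -((1 - s) ^ (m + 1) / ((m:ℝ) + 1))) (v' := fun s => (1 - s) ^ m)
      (fun s _ => by
        have := (((((hasDerivAt_id s).const_sub 1).pow (m + 1)).div_const ((m:ℝ) + 1)).neg)
        refine HasDerivAt.hasDerivWithinAt ?_
        convert! this using 1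
        simp
        field_simp)
      ((hcont (m + 2) le_rfl).mul continuousOn_const).intervalIntegrable
      (by apply Continuous.intervalIntegrable; fun_prop)
    have h0' := h0 (m + 1) le_rfl
    simp only [zero_mul, sub_zero, one_mul, zero_add, h0', sub_self, ne_eq, Nat.add_eq_zero_iff,
      one_ne_zero, and_false, not_false_eq_true, zero_pow, zero_div, neg_zero, mul_zero,
      zero_sub] at hparts
    have e1 : ∀ s : ℝ, (1 - s) ^ m * iteratedDerivWithin (m + 1) g (Icc 0 T)
        (s * y + (1 - s) * x) = iteratedDerivWithin (m + 1) g (Icc 0 T)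
        (s * y + (1 - s) * x) * (1 - s) ^ m := fun s => mul_comm _ _
    have e2 : ∀ s : ℝ, iteratedDerivWithin (m + 1 + 1) g (Icc 0 T) (s * y + (1 - s) * x) * (y - x)
        * -((1 - s) ^ (m + 1) / ((m:ℝ) + 1)) = (-((y - x) / ((m:ℝ) + 1))) * ((1 - s) ^ (m + 1) *
        iteratedDerivWithin (m + 1 + 1) g (Icc 0 T) (s * y + (1 - s) * x)) := fun s => by ring
    simp only [e1] at ih
    rw [ih, hparts]
    simp only [e2]
    rw [intervalIntegral.integral_const_mul]
    have hfac : ((m.factorial : ℝ)) ≠ 0 := by positivity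
    rw [Nat.factorial_succ]
    push_cast
    field_simp
    ring

/-- At a point `x` where `g` and its derivatives up to order `m + 1` vanish, the Hölder condition
on the highest one improves the order of vanishing of `g` to `m + 1 + α`. -/
theorem flat_le {T : ℝ} (hT : 0 < T) (m : ℕ) (g : ℝ → ℝ)
    (hg : ContDiffOn ℝ (m + 1 : ℕ) g (Icc 0 T)) {x y α C : ℝ} (hα : 0 < α) (hC : 0 ≤ C)
    (hx : x ∈ Icc 0 T) (hy : y ∈ Icc 0 T)
    (h0 : ∀ j ≤ m + 1, iteratedDerivWithin j g (Icc 0 T) x = 0)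
    (hH : ∀ x ∈ Icc 0 T, ∀ y ∈ Icc 0 T, |iteratedDerivWithin (m + 1) g (Icc 0 T) x -
      iteratedDerivWithin (m + 1) g (Icc 0 T) y| ≤ C * |x - y| ^ α) :
    |g y| ≤ C * |y - x| ^ (((m + 1 : ℕ) : ℝ) + α) := by
  have hI : ‖∫ s in (0:ℝ)..1, (1 - s) ^ m *
      iteratedDerivWithin (m + 1) g (Icc 0 T) (s * y + (1 - s) * x)‖
      ≤ C * |y - x| ^ α * |(1:ℝ) - 0| := by
    apply intervalIntegral.norm_integral_le_of_norm_le_const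
    intro s hs
    rw [uIoc_of_le zero_le_one] at hs
    have hmem : s * y + (1 - s) * x ∈ Icc 0 T :=
      (convex_Icc 0 T) hy hx hs.1.le (by linarith [hs.2]) (by ring)
    have h1 := hH _ hmem x hx
    rw [h0 (m + 1) le_rfl, sub_zero, show s * y + (1 - s) * x - x = s * (y - x) by ring,
      abs_mul, abs_of_pos hs.1] at h1
    have h2 : (s * |y - x|) ^ α ≤ |y - x| ^ α := by
      apply Real.rpow_le_rpow (mul_nonneg hs.1.le (abs_nonneg _)) _ hα.le
      exact mul_le_of_le_one_left (abs_nonneg _) hs.2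
    have h3 : |(1 - s) ^ m| ≤ 1 := by
      rw [abs_of_nonneg (pow_nonneg (by linarith [hs.2]) _)]
      exact pow_le_one₀ (by linarith [hs.2]) (by linarith [hs.1])
    rw [Real.norm_eq_abs, abs_mul]
    calc _ ≤ 1 * (C * |y - x| ^ α) := by
          gcongr
          exact h1.trans (by gcongr)
      _ = _ := one_mul _
  rw [taylor_flat hT m g hg hx hy (fun j hj => h0 j (by omega)), abs_mul, abs_div, abs_pow,
    Nat.abs_cast]
  rw [Real.norm_eq_abs, sub_zero, abs_one, mul_one] at hI
  have hfac : (1:ℝ) ≤ m.factorial := by exact_mod_cast Nat.factorial_pos m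
  calc _ ≤ |y - x| ^ (m + 1) * (C * |y - x| ^ α) := by
        gcongr
        exact div_le_self (by positivity) hfac
    _ = C * |y - x| ^ (((m + 1 : ℕ) : ℝ) + α) := by
        rw [Real.rpow_add_of_nonneg (abs_nonneg _) (by positivity) hα.le, Real.rpow_natCast]
        ring

theorem hasDerivWithinAt_zero_of_le {S : Set ℝ} {h : ℝ → ℝ} {z C β : ℝ} (hβ : 0 < β)
    (hz : h z = 0) (hle : ∀ t ∈ S, |h t| ≤ C * |t - z| ^ (1 + β)) :
    HasDerivWithinAt h 0 S z := by
  rw [hasDerivWithinAt_iff_isLittleO, Asymptotics.isLittleO_iff]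
  intro c hc
  have hlim : Filter.Tendsto (fun t => C * |t - z| ^ β) (nhdsWithin z S) (nhds 0) := by
    have : Continuous (fun t => C * |t - z| ^ β) :=
      continuous_const.mul ((by fun_prop : Continuous fun t => |t - z|).rpow_const
        (fun _ => Or.inr hβ.le))
    have := (this.tendsto z).mono_left (nhdsWithin_le_nhds (s := S))
    simpa [Real.zero_rpow hβ.ne'] using this
  filter_upwards [hlim.eventually (gt_mem_nhds hc), self_mem_nhdsWithin] with t ht htS
  simp only [hz, sub_zero, smul_zero, Real.norm_eq_abs]
  refine (hle t htS).trans ?_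
  rw [Real.rpow_add_of_nonneg (abs_nonneg _) zero_le_one hβ.le, Real.rpow_one]
  nlinarith [abs_nonneg (t - z)]


/-- Under the hypotheses of the Theorem, including the boundedness of
`N(x,y)/D(x,y)` on `{f = 0} × {f > 0}`, for `μ ∈ (1/(k+α), 1)` with `β = μ(k+α) - 1 ≤ 1`,
the derivative `(f^μ)'` is Hölder continuous with exponent `β` at every zero of `f`. -/
theorem pow_mu_deriv_holder_at_zero
    (T : ℝ) (hT : 0 < T) (k : ℕ) (hk : 2 ≤ k) (α : ℝ) (hα : α ∈ Set.Ioc (0 : ℝ) 1)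
    (f : ℝ → ℝ)
    (hf : ContDiffOn ℝ k f (Set.Icc 0 T))
    (hHolder : ∃ C : ℝ, ∀ x ∈ Set.Icc 0 T, ∀ y ∈ Set.Icc 0 T,
      |iteratedDerivWithin k f (Set.Icc 0 T) x - iteratedDerivWithin k f (Set.Icc 0 T) y|
        ≤ C * |x - y| ^ α)
    (hf0 : ∀ x ∈ Set.Icc 0 T, 0 ≤ f x)
    (hzero : ∃ x ∈ Set.Icc 0 T, f x = 0)
    (hvanish : ∀ x ∈ Set.Icc 0 T, f x = 0 → ∀ j : ℕ, 1 ≤ j → j ≤ k →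
      iteratedDerivWithin j f (Set.Icc 0 T) x = 0)
    (hND : ∃ M : ℝ, ∀ x ∈ Set.Icc 0 T, f x = 0 → ∀ y ∈ Set.Icc 0 T, 0 < f y →
      |((y - x) ^ (k - 1) *
          ∫ s in (0:ℝ)..1, (1 - s) ^ (k - 2) *
            iteratedDerivWithin k f (Set.Icc 0 T) (s * y + (1 - s) * x)) /
        (((y - x) ^ k *
          ∫ s in (0:ℝ)..1, (1 - s) ^ (k - 1) *
            iteratedDerivWithin k f (Set.Icc 0 T) (s * y + (1 - s) * x))
              ^ (((k : ℝ) + α - 1) / ((k : ℝ) + α)))| ≤ M)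
    (μ : ℝ) (hμ : μ ∈ Set.Ioo (1 / ((k : ℝ) + α)) 1)
    (β : ℝ) (hβ : β = μ * ((k : ℝ) + α) - 1) (hβ1 : β ≤ 1) :
    ∀ x ∈ Set.Icc 0 T, f x = 0 →
      ∃ C : ℝ, ∀ y ∈ Set.Icc 0 T,
        |derivWithin (fun t => f t ^ μ) (Set.Icc 0 T) y -
          derivWithin (fun t => f t ^ μ) (Set.Icc 0 T) x| ≤ C * |y - x| ^ β := by
  obtain ⟨m, rfl⟩ : ∃ m, k = m + 2 := ⟨k - 2, by omega⟩
  obtain ⟨hα0, -⟩ := hα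
  obtain ⟨C₀, hC₀⟩ := hHolder
  obtain ⟨M, hM⟩ := hND
  obtain ⟨hμ1, hμ2⟩ := hμ
  have hu : UniqueDiffOn ℝ (Icc (0:ℝ) T) := uniqueDiffOn_Icc hT
  set A : ℝ := ((m + 2 : ℕ) : ℝ) + α with hA
  have hApos : 0 < A := by positivity
  have hμ0 : 0 < μ := (by positivity : 0 < 1 / A).trans hμ1
  have hβ0 : 0 < β := by
    rw [hβ]; rw [div_lt_iff₀ hApos] at hμ1; linarith
  -- The Hölder constant may be taken nonnegative.
  set C : ℝ := |C₀|
  have hC : 0 ≤ C := abs_nonneg _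
  have hvan : ∀ x ∈ Icc 0 T, f x = 0 → ∀ j ≤ m + 1 + 1,
      iteratedDerivWithin j f (Icc 0 T) x = 0 := by
    intro x hx hfx j hj
    rcases Nat.eq_zero_or_pos j with rfl | h
    · simpa using hfx
    · exact hvanish x hx hfx j h hj
  have hgrow : ∀ x ∈ Icc 0 T, f x = 0 → ∀ y ∈ Icc 0 T, f y ≤ C * |y - x| ^ A := by
    intro x hx hfx y hy
    refine (le_abs_self _).trans (flat_le hT (m + 1) f hf hα0 hC hx hy (hvan x hx hfx) ?_)
    exact fun a ha b hb => (hC₀ a ha b hb).trans (by gcongr; exact le_abs_self _)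
  have hzd : ∀ z ∈ Icc 0 T, f z = 0 → derivWithin (fun t => f t ^ μ) (Icc 0 T) z = 0 := by
    intro z hz hfz
    refine (hasDerivWithinAt_zero_of_le (C := C ^ μ) hβ0 ?_ ?_).derivWithin (hu z hz)
    · simp [hfz, Real.zero_rpow hμ0.ne']
    · intro t ht
      rw [abs_of_nonneg (Real.rpow_nonneg (hf0 t ht) _)]
      refine (Real.rpow_le_rpow (hf0 t ht) (hgrow z hz hfz t ht) hμ0.le).trans_eq ?_
      rw [Real.mul_rpow hC (by positivity), ← Real.rpow_mul (abs_nonneg _), hβ]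
      congr 2
      ring
  intro x hx hfx
  -- By Taylor's formula the base of the denominator is `L * f y` and the numerator is `(k - 2)! * f' y`.
  set L : ℝ := ((m + 1).factorial : ℝ)
  have hL : 0 < L := by positivity
  set θ : ℝ := (A - 1) / A with hθ
  set K : ℝ := |M| * L ^ θ with hK
  have hder : ∀ y ∈ Icc 0 T, 0 < f y → |derivWithin f (Icc 0 T) y| ≤ K * f y ^ θ := by
    intro y hy hfy
    have hB := taylor_flat hT (m + 1) f hf hx hy (fun j hj => hvan x hx hfx j (by omega))
    have hf' : ContDiffOn ℝ (m + 1 : ℕ) (derivWithin f (Icc 0 T)) (Icc 0 T) :=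
      hf.derivWithin hu (by norm_cast)
    have hN := taylor_flat hT m (derivWithin f (Icc 0 T)) hf' hx hy (fun j hj => by
      rw [← iteratedDerivWithin_succ']; exact hvan x hx hfx (j + 1) (by omega))
    rw [← iteratedDerivWithin_succ'] at hN
    have hq := hM x hx hfx y hy hfy
    simp only [show m + 2 - 1 = m + 1 by omega, show m + 2 - 2 = m by omega] at hq
    rw [div_mul_eq_mul_div, eq_div_iff (by positivity)] at hB hN
    have hB' := hB
    have hN' := hN
    rw [show m + 1 + 1 = m + 2 by omega] at hB' hN'
    rw [← hB', ← hN'] at hq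
    have hpos : 0 < (f y * L) ^ θ := by positivity
    rw [abs_div, abs_of_pos hpos, div_le_iff₀ hpos, abs_mul, Nat.abs_cast,
      Real.mul_rpow hfy.le hL.le] at hq
    have hfac : (1:ℝ) ≤ m.factorial := by exact_mod_cast Nat.factorial_pos m
    calc |derivWithin f (Icc 0 T) y| ≤ |derivWithin f (Icc 0 T) y| * m.factorial :=
          le_mul_of_one_le_right (abs_nonneg _) hfac
      _ ≤ M * (f y ^ θ * L ^ θ) := hq
      _ ≤ |M| * (f y ^ θ * L ^ θ) := by gcongr; exact le_abs_self M
      _ = K * f y ^ θ := by rw [hK]; ring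
  have hK0 : 0 ≤ K := by positivity
  refine ⟨K * μ * C ^ (β / A), fun y hy => ?_⟩
  rw [hzd x hx hfx, sub_zero]
  rcases (hf0 y hy).eq_or_lt with h | hfy
  · rw [hzd y hy h.symm, abs_zero]
    positivity
  have hdf : DifferentiableWithinAt ℝ f (Icc 0 T) y :=
    hf.differentiableOn (by norm_cast) y hy
  rw [(hdf.hasDerivWithinAt.rpow_const (p := μ) (Or.inl hfy.ne')).derivWithin (hu y hy),
    abs_mul, abs_mul, abs_of_pos hμ0, abs_of_pos (Real.rpow_pos_of_pos hfy _)]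
  calc _ ≤ K * f y ^ θ * μ * f y ^ (μ - 1) := by gcongr; exact hder y hy hfy
    _ = K * μ * f y ^ (β / A) := by
        have : β / A = θ + (μ - 1) := by rw [hθ, hβ]; field_simp; ring
        rw [this, Real.rpow_add hfy]; ring
    _ ≤ K * μ * (C * |y - x| ^ A) ^ (β / A) := by gcongr; exact hgrow x hx hfx y hy
    _ = _ := by
        rw [Real.mul_rpow hC (by positivity), ← Real.rpow_mul (abs_nonneg _),
          mul_div_cancel₀ _ hApos.ne', ← mul_assoc]
end

section
/- Let T > 0, k ≥ 2 an integer, α ∈ (0,1], and let f ∈ C^{k,α}[0,T] satisfy f ≥ 0 on [0,T] and have at least one zero in [0,T]. Assume that f'(x) = ⋯ = f^{(k)}(x) = 0 whenever f(x) = 0, and that N(x,y)/D(x,y) is bounded for (x,y) ranging over {t ∈ [0,T] : f(t) = 0} × {t ∈ [0,T] : f(t) > 0}. Let μ ∈ (1/(k+α), 1) with μ(k+α) − 1 ≤ 1. Then for every x ∈ [0,T] with f(x) > 0, the derivative (f^μ)' is Lipschitz continuous at x, i.e. there is a constant C (depending on x) such that |(f^μ)'(y) − (f^μ)'(x)| ≤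 C|y − x| for all y ∈ [0,T]. -/
/-!
Since `f > 0` near `x`, the function `f ^ μ` is twice differentiable near `x`, so its derivative is
Lipschitz at `x` locally. Away from `x` it is enough that `(f ^ μ)'` is bounded on `[0,T]`.

For the bound at points where `f > 0`, fix a zero `z` of `f`. As all derivatives of `f` up to
order `k` vanish at `z`, Taylor's formula with integral remainder (`taylor_vanish`) identifies the
numerator `N(z,y)` with `(k-2)! f'(y)` and the base of `D(z,y)` with `(k-1)! f(y)`. Boundedness of
`N/D` therefore says `|f'| ≤ M' f ^ (1 - 1/(k+α))` wherever `f > 0` (`deriv_bound`), so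
`|(f ^ μ)'| = μ f ^ (μ-1) |f'| ≤ μ M' f ^ (μ - 1/(k+α))`, which is bounded because
`μ > 1/(k+α)`. At a zero of `f` in `(0,T)` the function `f ^ μ` has a local minimum, so its
derivative is `0` there; the two endpoints contribute only finitely many values.
-/

open Set Filter Topology

/-- One integration by parts along the segment from `x` to `y`. -/
lemma segment_parts {T : ℝ} {g g' : ℝ → ℝ} {x y : ℝ} (hx : x ∈ Icc 0 T) (hy : y ∈ Icc 0 T)
    (hg : ∀ t ∈ Icc 0 T, HasDerivWithinAt g (g' t) (Icc 0 T) t)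
    (hg' : ContinuousOn g' (Icc 0 T)) (n : ℕ) :
    (y - x) * ∫ s in (0:ℝ)..1, (1 - s) ^ n * g' (s * y + (1 - s) * x)
      = 0 ^ n * g y - g x + n * ∫ s in (0:ℝ)..1, (1 - s) ^ (n - 1) * g (s * y + (1 - s) * x) := by
  have hmaps : MapsTo (fun s : ℝ => s * y + (1 - s) * x) (Icc 0 1) (Icc 0 T) := by
    intro s hs
    have h1 : 0 ≤ 1 - s := by linarith [hs.2]
    constructor
    · have := mul_nonneg hs.1 hy.1
      have := mul_nonneg h1 hx.1
      show 0 ≤ s * y + (1 - s) * x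
      linarith
    · have := mul_le_mul_of_nonneg_left hy.2 hs.1
      have := mul_le_mul_of_nonneg_left hx.2 h1
      show s * y + (1 - s) * x ≤ T
      linarith
  have h01 : uIcc (0:ℝ) 1 = Icc 0 1 := uIcc_of_le zero_le_one
  have hu : ∀ s ∈ uIcc (0:ℝ) 1, HasDerivWithinAt (fun s : ℝ => (1 - s) ^ n)
      (-(n * (1 - s) ^ (n - 1))) (uIcc 0 1) s := by
    intro s _
    have : HasDerivAt (fun s : ℝ => (1 - s) ^ n) (n * (1 - s) ^ (n - 1) * (-1)) s :=
      ((hasDerivAt_id s).const_sub 1).pow n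
    exact (this.congr_deriv (by ring)).hasDerivWithinAt
  have hv : ∀ s ∈ uIcc (0:ℝ) 1, HasDerivWithinAt (fun s : ℝ => g (s * y + (1 - s) * x))
      (g' (s * y + (1 - s) * x) * (y - x)) (uIcc 0 1) s := by
    intro s hs
    rw [h01] at hs ⊢
    have hl : HasDerivAt (fun s : ℝ => s * y + (1 - s) * x) (y - x) s := by
      have : HasDerivAt (fun s : ℝ => s * y + (1 - s) * x) (1 * y + (-1) * x) s :=
        ((hasDerivAt_id s).mul_const y).add (((hasDerivAt_id s).const_sub 1).mul_const x)
      exact this.congr_deriv (by ring)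
    exact (hg _ (hmaps hs)).comp s hl.hasDerivWithinAt hmaps
  have hcl : ContinuousOn (fun s : ℝ => s * y + (1 - s) * x) (Icc 0 1) := by fun_prop
  have h := intervalIntegral.integral_mul_deriv_eq_deriv_mul_of_hasDerivWithinAt hu hv
    (Continuous.intervalIntegrable (by fun_prop) _ _)
    (ContinuousOn.intervalIntegrable (by
      rw [h01]
      exact (hg'.comp hcl hmaps).mul continuousOn_const))
  have e1 : ∫ s in (0:ℝ)..1, (1 - s) ^ n * (g' (s * y + (1 - s) * x) * (y - x))
      = (y - x) * ∫ s in (0:ℝ)..1, (1 - s) ^ n * g' (s * y + (1 - s) * x) := by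
    rw [← intervalIntegral.integral_const_mul]
    congr 1; ext s; ring
  have e2 : ∫ s in (0:ℝ)..1, -(n * (1 - s) ^ (n - 1)) * g (s * y + (1 - s) * x)
      = -(n * ∫ s in (0:ℝ)..1, (1 - s) ^ (n - 1) * g (s * y + (1 - s) * x)) := by
    rw [← intervalIntegral.integral_const_mul, ← intervalIntegral.integral_neg]
    congr 1; ext s; ring
  rw [e1, e2] at h
  simpa using h

/-- Taylor's formula with integral remainder for a function all of whose derivatives of order at
most `n` vanish at `x`; here `G j` is the `j`-th derivative on `[0,T]`. -/
lemma taylor_vanish {T : ℝ} {G : ℕ → ℝ → ℝ} {x y : ℝ} (hx : x ∈ Icc 0 T) (hy : y ∈ Icc 0 T)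
    (n : ℕ) (hG : ∀ j ≤ n, ∀ t ∈ Icc 0 T, HasDerivWithinAt (G j) (G (j + 1) t) (Icc 0 T) t)
    (hc : ∀ j ≤ n, ContinuousOn (G (j + 1)) (Icc 0 T)) (h0 : ∀ j ≤ n, G j x = 0) :
    (n.factorial : ℝ) * G 0 y
      = (y - x) ^ (n + 1) * ∫ s in (0:ℝ)..1, (1 - s) ^ n * G (n + 1) (s * y + (1 - s) * x) := by
  induction n with
  | zero =>
    have := segment_parts hx hy (hG 0 le_rfl) (hc 0 le_rfl) 0
    have h00 := h0 0 le_rfl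
    rw [h00] at this
    rw [zero_add, pow_one, this]
    simp
  | succ n ih =>
    have h1 := ih (fun j hj => hG j (by omega)) (fun j hj => hc j (by omega))
      (fun j hj => h0 j (by omega))
    have h2 := segment_parts hx hy (hG (n + 1) le_rfl) (hc (n + 1) le_rfl) (n + 1)
    rw [h0 (n + 1) le_rfl] at h2
    rw [pow_succ, mul_assoc, h2, Nat.factorial_succ]
    push_cast
    have h3 : (0:ℝ) ^ (n + 1) = 0 := by simp
    rw [h3]
    linear_combination ((n:ℝ) + 1) * h1

/-- If `N = a f'(y)`, `D = (b f(y)) ^ θ` and `|N / D| ≤ M`, then `|f'(y)|` is controlled by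
`f(y) ^ θ`. -/
lemma deriv_bound {a b M θ v d : ℝ} (ha : 0 < a) (hb : 0 < b) (hv : 0 < v)
    (h : |a * d / (b * v) ^ θ| ≤ M) : |d| ≤ M * b ^ θ / a * v ^ θ := by
  have hD : 0 < (b * v) ^ θ := Real.rpow_pos_of_pos (by positivity) _
  rw [abs_div, abs_of_pos hD, div_le_iff₀ hD, abs_mul, abs_of_pos ha,
    Real.mul_rpow hb.le hv.le] at h
  rw [div_mul_eq_mul_div, le_div_iff₀ ha]
  linarith


/-- Under the hypotheses of the Theorem, for `μ ∈ (1/(k+α), 1)` with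
`μ(k+α) - 1 ≤ 1`, the derivative `(f^μ)'` is Lipschitz continuous at every point `x`
of `[0,T]` where `f(x) > 0`. -/
theorem pow_mu_deriv_lipschitz_at_pos
    (T : ℝ) (hT : 0 < T) (k : ℕ) (hk : 2 ≤ k) (α : ℝ) (hα : α ∈ Set.Ioc (0 : ℝ) 1)
    (f : ℝ → ℝ)
    (hf : ContDiffOn ℝ k f (Set.Icc 0 T))
    (hHolder : ∃ C : ℝ, ∀ x ∈ Set.Icc 0 T, ∀ y ∈ Set.Icc 0 T,
      |iteratedDerivWithin k f (Set.Icc 0 T) x - iteratedDerivWithin k f (Set.Icc 0 T) y|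
        ≤ C * |x - y| ^ α)
    (hf0 : ∀ x ∈ Set.Icc 0 T, 0 ≤ f x)
    (hzero : ∃ x ∈ Set.Icc 0 T, f x = 0)
    (hvanish : ∀ x ∈ Set.Icc 0 T, f x = 0 → ∀ j : ℕ, 1 ≤ j → j ≤ k →
      iteratedDerivWithin j f (Set.Icc 0 T) x = 0)
    (hND : ∃ M : ℝ, ∀ x ∈ Set.Icc 0 T, f x = 0 → ∀ y ∈ Set.Icc 0 T, 0 < f y →
      |((y - x) ^ (k - 1) *
          ∫ s in (0:ℝ)..1, (1 - s) ^ (k - 2) *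
            iteratedDerivWithin k f (Set.Icc 0 T) (s * y + (1 - s) * x)) /
        (((y - x) ^ k *
          ∫ s in (0:ℝ)..1, (1 - s) ^ (k - 1) *
            iteratedDerivWithin k f (Set.Icc 0 T) (s * y + (1 - s) * x))
              ^ (((k : ℝ) + α - 1) / ((k : ℝ) + α)))| ≤ M)
    (μ : ℝ) (hμ : μ ∈ Set.Ioo (1 / ((k : ℝ) + α)) 1)
    (hβ1 : μ * ((k : ℝ) + α) - 1 ≤ 1) :
    ∀ x ∈ Set.Icc 0 T, 0 < f x →
      ∃ C : ℝ, ∀ y ∈ Set.Icc 0 T,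
        |derivWithin (fun t => f t ^ μ) (Set.Icc 0 T) y -
          derivWithin (fun t => f t ^ μ) (Set.Icc 0 T) x| ≤ C * |y - x| := by
  intro x hx hfx
  set F : ℕ → ℝ → ℝ := fun j => iteratedDerivWithin j f (Icc 0 T) with hF
  have hud : UniqueDiffOn ℝ (Icc 0 T) := uniqueDiffOn_Icc hT
  have hF0 : F 0 = f := by simp [hF]
  have hFd : ∀ j < k, ∀ t ∈ Icc 0 T, HasDerivWithinAt (F j) (F (j + 1) t) (Icc 0 T) t := by
    intro j hj t ht
    have h1 := hf.differentiableOn_iteratedDerivWithin (m := j) (by exact_mod_cast hj) hud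
    have h2 := (h1 t ht).hasDerivWithinAt
    simp only [hF, iteratedDerivWithin_succ]
    exact h2
  have hFc : ∀ j ≤ k, ContinuousOn (F j) (Icc 0 T) := fun j hj =>
    hf.continuousOn_iteratedDerivWithin (by exact_mod_cast hj) hud
  have hfc : ContinuousOn f (Icc 0 T) := hf.continuousOn
  have hfd : ∀ t ∈ Icc 0 T, HasDerivWithinAt f (F 1 t) (Icc 0 T) t := by
    intro t ht
    have := hFd 0 (by omega) t ht
    rwa [hF0] at this
  have hpow : ∀ y ∈ Icc 0 T, 0 < f y →
      derivWithin (fun t => f t ^ μ) (Icc 0 T) y = F 1 y * μ * f y ^ (μ - 1) := by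
    intro y hy hfy
    exact ((hfd y hy).rpow_const (Or.inl hfy.ne')).derivWithin (hud y hy)
  obtain ⟨z, hz, hfz⟩ := hzero
  obtain ⟨M, hM⟩ := hND
  have hFz : ∀ j ≤ k, F j z = 0 := by
    intro j hj
    rcases Nat.eq_zero_or_pos j with rfl | hj0
    · rw [hF0, hfz]
    · exact hvanish z hz hfz j hj0 hj
  have hkα : 0 < (k : ℝ) + α := by
    have := hα.1
    positivity
  have hμ0 : 0 < μ := lt_trans (by positivity) hμ.1
  set θ : ℝ := ((k : ℝ) + α - 1) / ((k : ℝ) + α) with hθ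
  have hexp : 0 ≤ θ + (μ - 1) := by
    have : θ = 1 - 1 / ((k : ℝ) + α) := by rw [hθ]; field_simp
    linarith [hμ.1]
  obtain ⟨K, hK⟩ : ∃ K : ℝ, ∀ y ∈ Icc 0 T, 0 < f y → |F 1 y| ≤ K * f y ^ θ := by
    refine ⟨M * ((k - 1).factorial : ℝ) ^ θ / ((k - 2).factorial : ℝ), fun y hy hfy => ?_⟩
    obtain ⟨m, rfl⟩ : ∃ m, k = m + 2 := ⟨k - 2, by omega⟩
    have hN := taylor_vanish (G := fun j => F (j + 1)) hz hy m
      (fun j hj => hFd (j + 1) (by omega)) (fun j hj => hFc _ (by omega))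
      (fun j hj => hFz _ (by omega))
    have hD := taylor_vanish (G := F) hz hy (m + 1)
      (fun j hj => hFd j (by omega)) (fun j hj => hFc _ (by omega))
      (fun j hj => hFz _ (by omega))
    have h := hM z hz hfz y hy hfy
    have e1 : m + 2 - 1 = m + 1 := by omega
    have e2 : m + 2 - 2 = m := by omega
    simp only [e1, e2] at h ⊢
    rw [hF0] at hD
    refine deriv_bound (by positivity) (by positivity) hfy ?_
    rw [hD]
    simp only [zero_add] at hN
    rw [hN]
    exact h
  obtain ⟨S, hS⟩ : ∃ S : ℝ, ∀ y ∈ Icc 0 T, f y ≤ S := by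
    obtain ⟨S, hS⟩ := isCompact_Icc.bddAbove_image hfc
    exact ⟨S, fun y hy => hS (mem_image_of_mem f hy)⟩
  set d : ℝ → ℝ := fun y => derivWithin (fun t => f t ^ μ) (Icc 0 T) y with hd
  obtain ⟨B, hB0, hB⟩ : ∃ B : ℝ, 0 ≤ B ∧ ∀ y ∈ Icc 0 T, |d y| ≤ B := by
    have hS0 : 0 ≤ S ^ (θ + (μ - 1)) := Real.rpow_nonneg (hfx.le.trans (hS x hx)) _
    refine ⟨|K| * μ * S ^ (θ + (μ - 1)) + |d 0| + |d T|, by positivity, fun y hy => ?_⟩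
    have hmain : 0 ≤ |K| * μ * S ^ (θ + (μ - 1)) := by positivity
    rcases (hf0 y hy).lt_or_eq with hfy | hfy
    · have h1 : |d y| ≤ |K| * μ * S ^ (θ + (μ - 1)) := by
        have hp : 0 < f y ^ (μ - 1) := Real.rpow_pos_of_pos hfy _
        have hdy : d y = F 1 y * μ * f y ^ (μ - 1) := hpow y hy hfy
        rw [hdy, abs_mul, abs_mul, abs_of_pos hμ0, abs_of_pos hp]
        have hKy : |F 1 y| ≤ |K| * f y ^ θ := (hK y hy hfy).trans
          (mul_le_mul_of_nonneg_right (le_abs_self K) (Real.rpow_nonneg hfy.le _))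
        calc |F 1 y| * μ * f y ^ (μ - 1) ≤ (|K| * f y ^ θ) * μ * f y ^ (μ - 1) := by gcongr
          _ = |K| * μ * f y ^ (θ + (μ - 1)) := by rw [Real.rpow_add hfy]; ring
          _ ≤ |K| * μ * S ^ (θ + (μ - 1)) := by
              have := hS y hy
              gcongr
      linarith [abs_nonneg (d 0), abs_nonneg (d T)]
    · by_cases h0 : y = 0
      · subst h0; linarith [abs_nonneg (d T)]
      by_cases h1 : y = T
      · subst h1; linarith [abs_nonneg (d 0)]
      have hn : Icc 0 T ∈ 𝓝 y :=
        Icc_mem_nhds (lt_of_le_of_ne hy.1 (Ne.symm h0)) (lt_of_le_of_ne hy.2 h1)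
      have hmin : IsLocalMin (fun t => f t ^ μ) y := by
        filter_upwards [hn] with t ht
        rw [← hfy, Real.zero_rpow hμ0.ne']
        exact Real.rpow_nonneg (hf0 t ht) _
      have : d y = 0 := by
        simp only [hd]
        rw [derivWithin_of_mem_nhds hn, hmin.deriv_eq_zero]
      rw [this, abs_zero]
      positivity
  have hdiff : DifferentiableWithinAt ℝ (fun y => F 1 y * μ * f y ^ (μ - 1)) (Icc 0 T) x :=
    ((hFd 1 (by omega) x hx).differentiableWithinAt.mul_const μ).mul
      ((hfd x hx).rpow_const (Or.inl hfx.ne')).differentiableWithinAt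
  obtain ⟨c, hc⟩ := hdiff.isBigO_sub.bound
  have hpos : ∀ᶠ y in 𝓝[Icc 0 T] x, 0 < f y := (hfc x hx).eventually (lt_mem_nhds hfx)
  have hloc := hc.and hpos
  rw [eventually_nhdsWithin_iff, Metric.eventually_nhds_iff] at hloc
  obtain ⟨δ, hδ, hloc⟩ := hloc
  refine ⟨|c| + 2 * B / δ, fun y hy => ?_⟩
  change |d y - d x| ≤ _
  rcases lt_or_ge |y - x| δ with hyx | hyx
  · obtain ⟨h1, h2⟩ := hloc (by rwa [Real.dist_eq]) hy
    have hdy : d y = F 1 y * μ * f y ^ (μ - 1) := hpow y hy h2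
    have hdx : d x = F 1 x * μ * f x ^ (μ - 1) := hpow x hx hfx
    rw [hdy, hdx]
    simp only [Real.norm_eq_abs] at h1
    refine h1.trans (mul_le_mul_of_nonneg_right ?_ (abs_nonneg _))
    have : 0 ≤ 2 * B / δ := by positivity
    linarith [le_abs_self c]
  · have h1 : |d y - d x| ≤ 2 * B := by
      linarith [abs_sub (d y) (d x), hB y hy, hB x hx]
    have h2 : 2 * B ≤ 2 * B / δ * |y - x| := by
      rw [div_mul_eq_mul_div, le_div_iff₀ hδ]
      gcongr
    have h3 := mul_nonneg (abs_nonneg c) (abs_nonneg (y - x))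
    linarith
end

section
/- Let T > 0, k ≥ 2 an integer, α ∈ (0,1], and let f ∈ C^{k,α}[0,T] satisfy f ≥ 0 on [0,T] and have at least one zero in [0,T]. Assume that f'(x) = ⋯ = f^{(k)}(x) = 0 whenever f(x) = 0, and that N(x,y)/D(x,y) is bounded for (x,y) ranging over {t ∈ [0,T] : f(t) = 0} × {t ∈ [0,T] : f(t) > 0}. Then for every μ ∈ (1/(k+α), 1) with μ(k+α) − 1 ≤ 1, the function f^μ is continuously differentiable on [0,T], i.e. f^μ ∈ C^1[0,T]. -/
/-!
At a zero `x` of `f` all derivatives up to order `k` vanish, so Taylor's formula with integral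
remainder identifies, up to factorials, the two quantities of the hypothesis:
`D(x,y) = ((k-1)! f(y))^((p-1)/p)` and `N(x,y) = (k-2)! f'(y)`, where `p = k + α`
(`factorial_mul_eq_integral`, applied to `f` and to `f'`). Boundedness of `N / D` therefore says
`|f'| ≤ K f^((p-1)/p)` on `{f > 0}`, whence `|(f^μ)'| = μ f^(μ-1) |f'| ≤ μ K f^(μ - 1/p)`, which
tends to `0` as `f → 0` because `μ > 1/p`. The same formula for `f` together with the Hölder
condition gives `f(y) ≤ C |y - x|^p`, so `f(y)^μ = O(|y - x|^(μ p))` with `μ p > 1`, and `f^μ` has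
derivative `0` at each zero. Hence `μ f^(μ-1) f'` (with value `0` at the zeros) is a continuous
derivative of `f^μ`; this last part is `contDiffOn_one_rpow_of_bounds`.
-/

open Set Filter Topology Asymptotics

/-- Taylor's formula with integral remainder, on the segment from `x` to `y`, for a function whose
derivatives of order `0, …, n` vanish at `x`. Derivatives are taken within the fixed interval
`[0,T]`, and `y < x` is allowed. -/
lemma factorial_mul_eq_integral {T : ℝ} (hT : 0 < T) {g : ℝ → ℝ} {x y : ℝ}
    (hx : x ∈ Icc 0 T) (hy : y ∈ Icc 0 T) (n : ℕ)
    (hg : ContDiffOn ℝ (n + 1 : ℕ) g (Icc 0 T))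
    (h0 : ∀ j ≤ n, iteratedDerivWithin j g (Icc 0 T) x = 0) :
    (n.factorial : ℝ) * g y = (y - x) ^ (n + 1) *
      ∫ s in (0:ℝ)..1, (1 - s) ^ n *
        iteratedDerivWithin (n + 1) g (Icc 0 T) (s * y + (1 - s) * x) := by
  have hU : UniqueDiffOn ℝ (Icc 0 T) := uniqueDiffOn_Icc hT
  have hmap : MapsTo (fun s : ℝ => s * y + (1 - s) * x) (uIcc 0 1) (Icc 0 T) := by
    intro s hs
    rw [uIcc_of_le zero_le_one] at hs
    obtain ⟨hs0, hs1⟩ := hs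
    have := (convex_Icc (0:ℝ) T) hy hx hs0 (sub_nonneg.2 hs1) (by ring)
    simpa using this
  -- the composition of the `m`-th derivative with the segment is differentiable, for `m` below the
  -- order of smoothness
  have key : ∀ m N : ℕ, m < N → ContDiffOn ℝ N g (Icc 0 T) → ∀ s ∈ uIcc (0:ℝ) 1,
      HasDerivWithinAt (fun s : ℝ => iteratedDerivWithin m g (Icc 0 T) (s * y + (1 - s) * x))
        ((y - x) * iteratedDerivWithin (m + 1) g (Icc 0 T) (s * y + (1 - s) * x))
        (uIcc 0 1) s := by
    intro m N hm hN s hs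
    have h1 := (hN.differentiableOn_iteratedDerivWithin (m := m) (by exact_mod_cast hm) hU _
      (hmap hs)).hasDerivWithinAt
    rw [← iteratedDerivWithin_succ] at h1
    have h2 : HasDerivWithinAt (fun s : ℝ => s * y + (1 - s) * x) (y - x) (uIcc 0 1) s := by
      have := ((hasDerivWithinAt_id s (uIcc 0 1)).mul_const y).add
        (((hasDerivWithinAt_id s (uIcc 0 1)).const_sub 1).mul_const x)
      exact this.congr_deriv (by ring)
    have := h1.comp s h2 hmap
    rw [mul_comm] at this
    exact this
  have hcont : ∀ N : ℕ, ContDiffOn ℝ N g (Icc 0 T) → ContinuousOn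
      (fun s : ℝ => iteratedDerivWithin N g (Icc 0 T) (s * y + (1 - s) * x)) (uIcc 0 1) := by
    intro N hN
    exact (hN.continuousOn_iteratedDerivWithin le_rfl hU).comp (by fun_prop) hmap
  induction n with
  | zero =>
    have := intervalIntegral.integral_deriv_mul_eq_sub_of_hasDerivWithinAt
      (u := fun _ : ℝ => (1:ℝ)) (u' := fun _ => 0) (a := 0) (b := 1)
      (fun s _ => hasDerivWithinAt_const s _ 1) (key 0 1 one_pos (by simpa using hg))
      (by simp) ((hcont 1 (by simpa using hg)).intervalIntegrable.const_mul _)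
    have hx0 := h0 0 le_rfl
    simp only [iteratedDerivWithin_zero] at hx0
    simp [hx0] at this
    simp [this]
  | succ n ih =>
    have ih' := ih (hg.of_le (by exact_mod_cast Nat.le_succ _))
      (fun j hj => h0 j (hj.trans n.le_succ))
    have hu : ∀ s ∈ uIcc (0:ℝ) 1, HasDerivWithinAt (fun s : ℝ => -(1 - s) ^ (n + 1))
        ((n + 1 : ℝ) * (1 - s) ^ n) (uIcc 0 1) s := by
      intro s _
      have := (((hasDerivWithinAt_id s (uIcc (0:ℝ) 1)).const_sub 1).pow (n + 1)).neg
      exact this.congr_deriv (by simp)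
    have hparts := intervalIntegral.integral_mul_deriv_eq_deriv_mul_of_hasDerivWithinAt
      (a := 0) (b := 1) hu (key (n + 1) (n + 1 + 1) (Nat.lt_succ_self _) hg)
      (Continuous.intervalIntegrable (by fun_prop) _ _)
      ((hcont _ hg).intervalIntegrable.const_mul _)
    have hxn := h0 (n + 1) le_rfl
    simp only [neg_mul, mul_assoc, mul_left_comm _ (y - x), intervalIntegral.integral_neg,
      intervalIntegral.integral_const_mul] at hparts
    simp [hxn] at hparts
    rw [Nat.factorial_succ]
    push_cast
    rw [mul_assoc, ih', mul_left_comm, ← hparts]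
    ring

/-- A nonnegative `C¹` function with the growth bound `f(y) ≤ C |y - x|^p` at its zeros and the
differential inequality `|f'| ≤ K f^((p-1)/p)` has `C¹` powers `f^μ` for `μ > 1/p`. -/
lemma contDiffOn_one_rpow_of_bounds {S : Set ℝ} (hU : UniqueDiffOn ℝ S) {f : ℝ → ℝ}
    (hf : ContDiffOn ℝ 1 f S) (hf0 : ∀ x ∈ S, 0 ≤ f x)
    (hd0 : ∀ x ∈ S, f x = 0 → derivWithin f S x = 0)
    {p C K μ : ℝ} (hp : 0 < p) (hC : 0 ≤ C)
    (hgrow : ∀ x ∈ S, f x = 0 → ∀ y ∈ S, f y ≤ C * |y - x| ^ p)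
    (hdiff : ∀ y ∈ S, 0 < f y → |derivWithin f S y| ≤ K * f y ^ ((p - 1) / p))
    (hμ : 1 / p < μ) :
    ContDiffOn ℝ 1 (fun t => f t ^ μ) S := by
  have hμ0 : 0 < μ := lt_trans (by positivity) hμ
  have hμp : 0 < μ * p - 1 := by
    rw [div_lt_iff₀ hp] at hμ; linarith
  obtain ⟨hfd, hfc⟩ := (contDiffOn_one_iff_derivWithin hU).1 hf
  have hder : ∀ x ∈ S, HasDerivWithinAt (fun t => f t ^ μ)
      (derivWithin f S x * μ * f x ^ (μ - 1)) S x := by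
    intro x hx
    rcases (hf0 x hx).eq_or_lt with h | h
    · have hz := h.symm
      rw [hd0 x hx hz, zero_mul, zero_mul, hasDerivWithinAt_iff_isLittleO]
      simp only [hz, Real.zero_rpow hμ0.ne', sub_zero, smul_zero]
      have h1 : (fun y => f y ^ μ) =O[𝓝[S] x] fun y => |y - x| ^ (μ * p - 1) * (y - x) := by
        refine IsBigO.of_bound (C ^ μ) ?_
        filter_upwards [self_mem_nhdsWithin] with y hy
        have hle : f y ^ μ ≤ (C * |y - x| ^ p) ^ μ :=
          Real.rpow_le_rpow (hf0 y hy) (hgrow x hx hz y hy) hμ0.le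
        rw [Real.norm_of_nonneg (Real.rpow_nonneg (hf0 y hy) _), norm_mul,
          Real.norm_of_nonneg (by positivity), Real.norm_eq_abs]
        refine hle.trans (le_of_eq ?_)
        rw [Real.mul_rpow hC (by positivity), ← Real.rpow_mul (abs_nonneg _)]
        congr 1
        rcases eq_or_ne (y - x) 0 with h0 | h0
        · have : p * μ ≠ 0 := by positivity
          simp [h0, this]
        · rw [← Real.rpow_add_one (abs_ne_zero.2 h0)]
          ring_nf
      have h2 : (fun y => |y - x| ^ (μ * p - 1)) =o[𝓝[S] x] fun _ => (1:ℝ) := by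
        rw [isLittleO_one_iff]
        have : Continuous fun y : ℝ => |y - x| ^ (μ * p - 1) :=
          Continuous.rpow_const (by fun_prop) (fun _ => Or.inr hμp.le)
        have := this.tendsto x
        simp only [sub_self, abs_zero, Real.zero_rpow hμp.ne'] at this
        exact this.mono_left nhdsWithin_le_nhds
      simpa using h1.trans_isLittleO (h2.mul_isBigO (isBigO_refl (fun y => y - x) _))
    · exact (hfd x hx).hasDerivWithinAt.rpow_const (Or.inl h.ne')
  refine (contDiffOn_one_iff_derivWithin hU).2
    ⟨fun x hx => (hder x hx).differentiableWithinAt, ?_⟩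
  refine ContinuousOn.congr (f := fun x => derivWithin f S x * μ * f x ^ (μ - 1)) ?_
    fun x hx => (hder x hx).derivWithin (hU x hx)
  intro x hx
  rcases (hf0 x hx).eq_or_lt with h | h
  · have hz := h.symm
    have hq : 0 < μ - 1 / p := sub_pos.2 hμ
    have hlim : Tendsto (fun y => K * μ * f y ^ (μ - 1 / p)) (𝓝[S] x) (𝓝 0) := by
      have := ((hfd.continuousOn x hx).rpow_const (Or.inr hq.le)).tendsto.const_mul (K * μ)
      simpa only [hz, Real.zero_rpow hq.ne', mul_zero] using this
    unfold ContinuousWithinAt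
    simp only [hd0 x hx hz, zero_mul]
    refine squeeze_zero_norm' ?_ hlim
    filter_upwards [self_mem_nhdsWithin] with y hy
    rcases (hf0 y hy).eq_or_lt with h' | h'
    · rw [hd0 y hy h'.symm, ← h', Real.zero_rpow hq.ne']
      simp
    · rw [norm_mul, norm_mul, Real.norm_of_nonneg hμ0.le,
        Real.norm_of_nonneg (Real.rpow_nonneg h'.le _), Real.norm_eq_abs]
      calc |derivWithin f S y| * μ * f y ^ (μ - 1)
          ≤ K * f y ^ ((p - 1) / p) * μ * f y ^ (μ - 1) := by
            gcongr
            exact hdiff y hy h'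
        _ = K * μ * (f y ^ ((p - 1) / p) * f y ^ (μ - 1)) := by ring
        _ = K * μ * f y ^ (μ - 1 / p) := by
            rw [← Real.rpow_add h']
            congr 2
            field_simp
            ring
  · exact ((hfc x hx).mul continuousWithinAt_const).mul
      ((hfd.continuousOn x hx).rpow_const (Or.inl h.ne'))


/-- Under the hypotheses of the Theorem (including boundedness of
`N(x,y)/D(x,y)` on `{f = 0} × {f > 0}`), for every `μ ∈ (1/(k+α), 1)` with
`μ(k+α) - 1 ≤ 1`, the function `f^μ` belongs to `C^1[0,T]`. -/
theorem pow_mu_contDiffOn_one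
    (T : ℝ) (hT : 0 < T) (k : ℕ) (hk : 2 ≤ k) (α : ℝ) (hα : α ∈ Set.Ioc (0 : ℝ) 1)
    (f : ℝ → ℝ)
    (hf : ContDiffOn ℝ k f (Set.Icc 0 T))
    (hHolder : ∃ C : ℝ, ∀ x ∈ Set.Icc 0 T, ∀ y ∈ Set.Icc 0 T,
      |iteratedDerivWithin k f (Set.Icc 0 T) x - iteratedDerivWithin k f (Set.Icc 0 T) y|
        ≤ C * |x - y| ^ α)
    (hf0 : ∀ x ∈ Set.Icc 0 T, 0 ≤ f x)
    (hzero : ∃ x ∈ Set.Icc 0 T, f x = 0)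
    (hvanish : ∀ x ∈ Set.Icc 0 T, f x = 0 → ∀ j : ℕ, 1 ≤ j → j ≤ k →
      iteratedDerivWithin j f (Set.Icc 0 T) x = 0)
    (hND : ∃ M : ℝ, ∀ x ∈ Set.Icc 0 T, f x = 0 → ∀ y ∈ Set.Icc 0 T, 0 < f y →
      |((y - x) ^ (k - 1) *
          ∫ s in (0:ℝ)..1, (1 - s) ^ (k - 2) *
            iteratedDerivWithin k f (Set.Icc 0 T) (s * y + (1 - s) * x)) /
        (((y - x) ^ k *
          ∫ s in (0:ℝ)..1, (1 - s) ^ (k - 1) *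
            iteratedDerivWithin k f (Set.Icc 0 T) (s * y + (1 - s) * x))
              ^ (((k : ℝ) + α - 1) / ((k : ℝ) + α)))| ≤ M)
    (μ : ℝ) (hμ : μ ∈ Set.Ioo (1 / ((k : ℝ) + α)) 1)
    (hβ1 : μ * ((k : ℝ) + α) - 1 ≤ 1) :
    ContDiffOn ℝ 1 (fun t => f t ^ μ) (Set.Icc 0 T) := by
  obtain ⟨hα0, hα1⟩ := hα
  obtain ⟨C, hC⟩ := hHolder
  obtain ⟨M, hM⟩ := hND
  obtain ⟨x₀, hx₀, hfx₀⟩ := hzero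
  obtain ⟨m, rfl⟩ : ∃ m, k = m + 1 + 1 := ⟨k - 2, by omega⟩
  have hU : UniqueDiffOn ℝ (Icc 0 T) := uniqueDiffOn_Icc hT
  have hp : 0 < ((m + 1 + 1 : ℕ) : ℝ) + α := by positivity
  have hd0 : ∀ x ∈ Icc 0 T, f x = 0 → derivWithin f (Icc 0 T) x = 0 := by
    intro x hx hfx
    simpa [iteratedDerivWithin_one] using hvanish x hx hfx 1 le_rfl (by omega)
  have hTf : ∀ x ∈ Icc 0 T, f x = 0 → ∀ y ∈ Icc 0 T, _ := fun x hx hfx y hy =>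
    factorial_mul_eq_integral hT hx hy (m + 1) hf (fun j hj => by
      rcases Nat.eq_zero_or_pos j with rfl | hj0
      · simpa using hfx
      · exact hvanish x hx hfx j hj0 (by omega))
  have hf' : ContDiffOn ℝ (m + 1 : ℕ) (derivWithin f (Icc 0 T)) (Icc 0 T) :=
    hf.derivWithin hU (by norm_cast)
  have hTf' : ∀ x ∈ Icc 0 T, f x = 0 → ∀ y ∈ Icc 0 T, _ := fun x hx hfx y hy =>
    factorial_mul_eq_integral hT hx hy m hf' (fun j hj => by
      rw [← iteratedDerivWithin_succ']
      exact hvanish x hx hfx (j + 1) (by omega) (by omega))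
  simp only [← iteratedDerivWithin_succ'] at hTf'
  refine contDiffOn_one_rpow_of_bounds (p := ((m + 1 + 1 : ℕ) : ℝ) + α) (C := |C|)
    (K := M * ((m + 1).factorial : ℝ) ^ ((((m + 1 + 1 : ℕ) : ℝ) + α - 1) /
      (((m + 1 + 1 : ℕ) : ℝ) + α))) hU (hf.of_le (by norm_cast; omega)) hf0 hd0 hp
    (abs_nonneg C) ?_ ?_ hμ.1
  · intro x hx hfx y hy
    -- the `k`-th derivative vanishes at `x`, so the Hölder condition bounds it on the segment
    have hint : ‖∫ s in (0:ℝ)..1, (1 - s) ^ (m + 1) *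
        iteratedDerivWithin (m + 1 + 1) f (Icc 0 T) (s * y + (1 - s) * x)‖
          ≤ |C| * |y - x| ^ α * |(1:ℝ) - 0| := by
      refine intervalIntegral.norm_integral_le_of_norm_le_const fun s hs => ?_
      rw [uIoc_of_le zero_le_one] at hs
      obtain ⟨hs0, hs1⟩ := hs
      have hz : s * y + (1 - s) * x ∈ Icc 0 T := by
        simpa using (convex_Icc (0:ℝ) T) hy hx hs0.le (sub_nonneg.2 hs1) (by ring)
      have h1 := hC _ hz x hx
      rw [hvanish x hx hfx _ (by omega) le_rfl, sub_zero,
        show s * y + (1 - s) * x - x = s * (y - x) by ring, abs_mul, abs_of_pos hs0] at h1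
      have h2 : (s * |y - x|) ^ α ≤ |y - x| ^ α :=
        Real.rpow_le_rpow (by positivity) (mul_le_of_le_one_left (abs_nonneg _) hs1) hα0.le
      have h3 : |(1 - s) ^ (m + 1)| ≤ 1 := by
        rw [abs_of_nonneg (pow_nonneg (by linarith) _)]
        exact pow_le_one₀ (by linarith) (by linarith)
      rw [norm_mul, Real.norm_eq_abs, Real.norm_eq_abs]
      calc _ ≤ 1 * (|C| * |y - x| ^ α) := by
            gcongr
            exact h1.trans (mul_le_mul (le_abs_self C) h2 (by positivity) (abs_nonneg C))
        _ = _ := one_mul _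
    have hfac : (1:ℝ) ≤ ((m + 1).factorial : ℝ) := by exact_mod_cast Nat.factorial_pos _
    have hTay := hTf x hx hfx y hy
    calc f y ≤ ((m + 1).factorial : ℝ) * f y := le_mul_of_one_le_left (hf0 y hy) hfac
      _ ≤ |((m + 1).factorial : ℝ) * f y| := le_abs_self _
      _ ≤ |y - x| ^ (m + 1 + 1) * (|C| * |y - x| ^ α * |(1:ℝ) - 0|) := by
          rw [hTay, abs_mul, abs_pow]
          gcongr
          exact hint
      _ = |C| * |y - x| ^ (((m + 1 + 1 : ℕ) : ℝ) + α) := by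
          rw [Real.rpow_add_of_nonneg (abs_nonneg _) (by positivity) hα0.le, Real.rpow_natCast]
          simp
          ring
  · intro y hy hfy
    have h := hM x₀ hx₀ hfx₀ y hy hfy
    simp only [Nat.add_sub_cancel, show m + 1 + 1 - 2 = m by omega] at h
    rw [← hTf x₀ hx₀ hfx₀ y hy, ← hTf' x₀ hx₀ hfx₀ y hy, Real.mul_rpow (by positivity) hfy.le,
      abs_div, div_le_iff₀ (by positivity), abs_of_pos (a := _ * _ ^ _) (by positivity),
      abs_mul, Nat.abs_cast, ← mul_assoc] at h
    have hfac : (1:ℝ) ≤ (m.factorial : ℝ) := by exact_mod_cast Nat.factorial_pos _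
    exact (le_mul_of_one_le_left (abs_nonneg _) hfac).trans h
end

section
/- Let T > 0, k ≥ 2 an integer, α ∈ (0,1], and let f ∈ C^{k,α}[0,T]. Assume f^{(j)}(0) = 0 for j = 0, 1, …, k, and that there is η ∈ (0,T) with f^{(k)} > 0 on (0,η] and f^{(k)} ≥ 0 on [η,T]. Then the quotient N(0,y)/D(0,y) is bounded for y ∈ (0,T], i.e. there exists a constant M such that N(0,y)/D(0,y) ≤ M for all y ∈ (0,T]. -/
/-!
Write `g = f^{(k)}`, `p = k + α`, and let `I₁`, `I₂` be the integrals in the numerator and in the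
denominator, so that `N = y^{k-1} I₁` and `D = B^{(p-1)/p}` with `B = y^k I₂`. The claim is an
interpolation inequality of Landau–Kolmogorov type. Cut `I₁` at `s = 1 - δ`. Where `1 - s ≥ δ`, the
weight `(1-s)^{k-2}` is at most `(1-s)^{k-1}/δ`, so that part is at most `I₂/δ`. On the window
`[1-δ, 1]`, the Hölder bound allows `g` to be shifted left by one window length at the cost of
`C (yδ)^α`, and the shifted integral is again at most `I₂/δ` (`integral_weight_le`). Hence
`N ≤ 2B/(yδ) + C (yδ)^{p-1}` for all `δ ∈ (0, 1/2]`.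

Since `g(0) = 0`, the Hölder bound also gives `B ≤ C y^p`, so the near-optimal choice
`yδ = (B/C)^{1/p}/2` is admissible, and it yields `N ≤ M B^{(p-1)/p}` with `M` independent of `y`
(`div_rpow_le_of_forall_scale`).
-/

/-- Interpolation estimate on the unit interval: `h` is nonnegative and `K` bounds its increase
from `s - δ` to `s` when `s` lies in the window `[1 - δ, 1]`. -/
lemma integral_weight_le (h : ℝ → ℝ) (m : ℕ) (δ K : ℝ) (hδ : 0 < δ) (hδ2 : δ ≤ 1 / 2)
    (hc : ContinuousOn h (Set.Icc 0 1)) (h0 : ∀ s ∈ Set.Icc (0 : ℝ) 1, 0 ≤ h s)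
    (hK : ∀ s ∈ Set.Icc (1 - δ) 1, h s ≤ h (s - δ) + K) (hK0 : 0 ≤ K) :
    ∫ s in (0:ℝ)..1, (1 - s) ^ m * h s ≤
      2 * (∫ s in (0:ℝ)..1, (1 - s) ^ (m + 1) * h s) / δ + K * δ ^ (m + 1) := by
  have hi : ∀ (c : ℝ) (n : ℕ) (a b : ℝ), 0 ≤ a → a ≤ b → b ≤ 1 →
      IntervalIntegrable (fun s => (c - s) ^ n * h s) MeasureTheory.volume a b := by
    intro c n a b ha hab hb
    apply ContinuousOn.intervalIntegrable
    rw [Set.uIcc_of_le hab]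
    exact ContinuousOn.mul (by fun_prop) (hc.mono (Set.Icc_subset_Icc ha hb))
  -- A part of `[0, 1 - δ]` contributes at most the full integral with the raised weight.
  have key : ∀ (a c : ℝ), 0 ≤ a → a ≤ 1 - δ → 1 - δ ≤ c → c ≤ 1 →
      ∫ s in a..(1 - δ), (c - s) ^ m * h s ≤
        (∫ s in (0:ℝ)..1, (1 - s) ^ (m + 1) * h s) / δ := by
    intro a c ha ha' hc1 hc2
    have e1 : ∫ s in a..(1 - δ), (c - s) ^ m * h s ≤
        ∫ s in a..(1 - δ), (1 - s) ^ (m + 1) * h s / δ := by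
      apply intervalIntegral.integral_mono_on ha' (hi _ _ _ _ ha ha' (by linarith))
        ((hi _ _ _ _ ha ha' (by linarith)).div_const _)
      intro s hs
      have hh := h0 s ⟨by linarith [hs.1], by linarith [hs.2]⟩
      have w : (c - s) ^ m ≤ (1 - s) ^ m :=
        pow_le_pow_left₀ (by linarith [hs.2]) (by linarith) m
      have w0 : 0 ≤ (1 - s) ^ m := pow_nonneg (by linarith [hs.2]) m
      rw [le_div_iff₀ hδ, pow_succ]
      calc (c - s) ^ m * h s * δ ≤ (1 - s) ^ m * h s * (1 - s) := by
            apply mul_le_mul (by gcongr) (by linarith [hs.2]) hδ.le (by positivity)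
        _ = _ := by ring
    refine e1.trans ?_
    rw [intervalIntegral.integral_div]
    apply div_le_div_of_nonneg_right _ hδ.le
    apply intervalIntegral.integral_mono_interval ha ha' (by linarith) _
      (hi _ _ _ _ le_rfl zero_le_one le_rfl)
    refine (MeasureTheory.ae_restrict_iff' measurableSet_Ioc).2 (Filter.Eventually.of_forall ?_)
    intro s hs
    exact mul_nonneg (pow_nonneg (by linarith [hs.2]) _) (h0 s ⟨hs.1.le, hs.2⟩)
  have hsplit := intervalIntegral.integral_add_adjacent_intervals
    (hi 1 m 0 (1 - δ) le_rfl (by linarith) (by linarith))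
    (hi 1 m (1 - δ) 1 (by linarith) (by linarith) le_rfl)
  have k1 := key 0 1 le_rfl (by linarith) (by linarith) le_rfl
  have k2 := key (1 - δ - δ) (1 - δ) (by linarith) (by linarith) le_rfl (by linarith)
  have hsh : ∫ s in (1 - δ)..1, (1 - s) ^ m * h (s - δ) =
      ∫ s in (1 - δ - δ)..(1 - δ), (1 - δ - s) ^ m * h s := by
    rw [← intervalIntegral.integral_comp_sub_right (fun s => (1 - δ - s) ^ m * h s) δ]
    congr 1
    ext s
    ring_nf
  have hI : IntervalIntegrable (fun s => (1 - s) ^ m * h (s - δ))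
      MeasureTheory.volume (1 - δ) 1 := by
    apply ContinuousOn.intervalIntegrable
    rw [Set.uIcc_of_le (by linarith)]
    refine ContinuousOn.mul (by fun_prop) (hc.comp (by fun_prop) ?_)
    intro s hs
    exact ⟨by linarith [hs.1], by linarith [hs.2]⟩
  have k3 : ∫ s in (1 - δ)..1, (1 - s) ^ m * h s ≤
      ∫ s in (1 - δ)..1, ((1 - s) ^ m * h (s - δ) + K * δ ^ m) := by
    apply intervalIntegral.integral_mono_on (by linarith)
      (hi 1 m (1 - δ) 1 (by linarith) (by linarith) le_rfl)
      (hI.add intervalIntegrable_const)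
    intro s hs
    have w0 : 0 ≤ (1 - s) ^ m := pow_nonneg (by linarith [hs.2]) m
    have w1 : (1 - s) ^ m ≤ δ ^ m :=
      pow_le_pow_left₀ (by linarith [hs.2]) (by linarith [hs.1]) m
    nlinarith [mul_le_mul_of_nonneg_left (hK s hs) w0, mul_le_mul_of_nonneg_left w1 hK0]
  rw [intervalIntegral.integral_add hI intervalIntegrable_const,
    intervalIntegral.integral_const, hsh, smul_eq_mul] at k3
  have e : (1 - (1 - δ)) * (K * δ ^ m) = K * δ ^ (m + 1) := by ring
  rw [e] at k3
  rw [← hsplit, mul_div_assoc]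
  linarith

/-- Optimization over the scale `δ`. The hypothesis `B ≤ C * y ^ p` makes the near-optimal
scale `δ = (B / C) ^ (1 / p) / (2 * y)` admissible. -/
lemma div_rpow_le_of_forall_scale (N B C y p : ℝ) (hp : 0 < p) (hC : 0 < C) (hy : 0 < y)
    (hB : 0 < B) (hBy : B ≤ C * y ^ p)
    (H : ∀ δ, 0 < δ → δ ≤ 1 / 2 → N ≤ 2 * B / (y * δ) + C * (y * δ) ^ (p - 1)) (hp1 : 1 ≤ p) :
    N / B ^ ((p - 1) / p) ≤ 5 * C / C ^ ((p - 1) / p) := by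
  obtain ⟨r, hr, hBr⟩ : ∃ r : ℝ, 0 < r ∧ B = C * r ^ p := by
    refine ⟨(B / C) ^ p⁻¹, by positivity, ?_⟩
    rw [Real.rpow_inv_rpow (by positivity) hp.ne']
    field_simp
  have hry : r ≤ y := by
    rw [hBr] at hBy
    exact (Real.rpow_le_rpow_iff hr.le hy.le hp).1 (le_of_mul_le_mul_left hBy hC)
  have h1 := H (r / (2 * y)) (by positivity) (by
    rw [div_le_iff₀ (by positivity)]; linarith)
  have e1 : y * (r / (2 * y)) = r / 2 := by field_simp
  rw [e1] at h1
  have e2 : 2 * B / (r / 2) = 4 * C * r ^ (p - 1) := by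
    rw [hBr, Real.rpow_sub_one hr.ne']
    field_simp
    ring
  have e3 : (r / 2) ^ (p - 1) ≤ r ^ (p - 1) :=
    Real.rpow_le_rpow (by positivity) (by linarith) (by linarith)
  have e4 : B ^ ((p - 1) / p) = C ^ ((p - 1) / p) * r ^ (p - 1) := by
    rw [hBr, Real.mul_rpow hC.le (by positivity), ← Real.rpow_mul hr.le,
      mul_div_cancel₀ _ hp.ne']
  have hN : N ≤ 5 * C * r ^ (p - 1) := by
    have := mul_le_mul_of_nonneg_left e3 hC.le
    rw [e2] at h1
    linarith
  have hq : 0 < r ^ (p - 1) := by positivity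
  rw [e4, div_le_div_iff₀ (by positivity) (by positivity)]
  calc N * C ^ ((p - 1) / p) ≤ 5 * C * r ^ (p - 1) * C ^ ((p - 1) / p) := by gcongr
    _ = _ := by ring


/-- If `f ∈ C^{k,α}[0,T]`, `f^{(j)}(0) = 0` for `j = 0,…,k`, and
`f^{(k)} > 0` on `(0,η]`, `f^{(k)} ≥ 0` on `[η,T]` for some `η ∈ (0,T)`, then the
quotient `N(0,y)/D(0,y)` is bounded above on `(0,T]`. -/
theorem ND_quotient_bounded
    (T : ℝ) (hT : 0 < T) (k : ℕ) (hk : 2 ≤ k) (α : ℝ) (hα : α ∈ Set.Ioc (0 : ℝ) 1)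
    (f : ℝ → ℝ)
    (hf : ContDiffOn ℝ k f (Set.Icc 0 T))
    (hHolder : ∃ C : ℝ, ∀ x ∈ Set.Icc 0 T, ∀ y ∈ Set.Icc 0 T,
      |iteratedDerivWithin k f (Set.Icc 0 T) x - iteratedDerivWithin k f (Set.Icc 0 T) y|
        ≤ C * |x - y| ^ α)
    (hvanish : ∀ j : ℕ, j ≤ k → iteratedDerivWithin j f (Set.Icc 0 T) 0 = 0)
    (η : ℝ) (hη : η ∈ Set.Ioo 0 T)
    (hpos : ∀ x ∈ Set.Ioc 0 η, 0 < iteratedDerivWithin k f (Set.Icc 0 T) x)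
    (hnonneg : ∀ x ∈ Set.Icc η T, 0 ≤ iteratedDerivWithin k f (Set.Icc 0 T) x) :
    ∃ M : ℝ, ∀ y ∈ Set.Ioc 0 T,
      (y ^ (k - 1) *
          ∫ s in (0:ℝ)..1, (1 - s) ^ (k - 2) * iteratedDerivWithin k f (Set.Icc 0 T) (s * y)) /
        ((y ^ k *
          ∫ s in (0:ℝ)..1, (1 - s) ^ (k - 1) * iteratedDerivWithin k f (Set.Icc 0 T) (s * y))
            ^ (((k : ℝ) + α - 1) / ((k : ℝ) + α))) ≤ M := by
  obtain ⟨hα0, hα1⟩ := hα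
  obtain ⟨C₀, hC₀⟩ := hHolder
  obtain ⟨m, rfl⟩ : ∃ m, k = m + 2 := ⟨k - 2, by omega⟩
  have hcont : ContinuousOn (iteratedDerivWithin (m + 2) f (Set.Icc 0 T)) (Set.Icc 0 T) :=
    hf.continuousOn_iteratedDerivWithin le_rfl (uniqueDiffOn_Icc hT)
  have hg0 : iteratedDerivWithin (m + 2) f (Set.Icc 0 T) 0 = 0 := hvanish _ le_rfl
  have hg : ∀ x ∈ Set.Icc 0 T, 0 ≤ iteratedDerivWithin (m + 2) f (Set.Icc 0 T) x := by
    intro x hx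
    rcases hx.1.eq_or_lt with rfl | hx0
    · exact hg0.ge
    · rcases le_total x η with h | h
      · exact (hpos x ⟨hx0, h⟩).le
      · exact hnonneg x ⟨h, hx.2⟩
  generalize iteratedDerivWithin (m + 2) f (Set.Icc 0 T) = g at *
  -- The Hölder constant is enlarged to a positive one, so that it can be divided by.
  obtain ⟨C, hC, hCg⟩ : ∃ C : ℝ, 0 < C ∧ ∀ x ∈ Set.Icc 0 T, ∀ y ∈ Set.Icc 0 T,
      |g x - g y| ≤ C * |x - y| ^ α := by
    refine ⟨|C₀| + 1, by positivity, fun x hx y hy => (hC₀ x hx y hy).trans ?_⟩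
    have : 0 ≤ |x - y| ^ α := by positivity
    gcongr
    linarith [le_abs_self C₀]
  set p : ℝ := ((m + 2 : ℕ) : ℝ) + α with hpdef
  have hp2 : 2 < p := by
    rw [hpdef]; push_cast
    have : (0 : ℝ) ≤ m := by positivity
    linarith
  refine ⟨5 * C / C ^ ((p - 1) / p), fun y hy => ?_⟩
  obtain ⟨hy0, hyT⟩ := hy
  have hmem : ∀ s ∈ Set.Icc (0 : ℝ) 1, s * y ∈ Set.Icc 0 T := fun s hs =>
    ⟨mul_nonneg hs.1 hy0.le, (mul_le_of_le_one_left hy0.le hs.2).trans hyT⟩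
  have hhc : ContinuousOn (fun s => g (s * y)) (Set.Icc 0 1) :=
    hcont.comp (by fun_prop) hmem
  have hh0 : ∀ s ∈ Set.Icc (0 : ℝ) 1, 0 ≤ g (s * y) := fun s hs => hg _ (hmem s hs)
  simp only [show m + 2 - 1 = m + 1 by omega, show m + 2 - 2 = m by omega]
  have hI2 : 0 ≤ ∫ s in (0:ℝ)..1, (1 - s) ^ (m + 1) * g (s * y) := by
    apply intervalIntegral.integral_nonneg zero_le_one
    intro s hs
    exact mul_nonneg (pow_nonneg (by linarith [hs.2]) _) (hh0 s hs)
  have hI2le : ∫ s in (0:ℝ)..1, (1 - s) ^ (m + 1) * g (s * y) ≤ C * y ^ α := by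
    have : ∫ s in (0:ℝ)..1, (1 - s) ^ (m + 1) * g (s * y) ≤
        ∫ s in (0:ℝ)..1, C * y ^ α := by
      apply intervalIntegral.integral_mono_on zero_le_one _ intervalIntegrable_const
      · intro s hs
        have w := pow_le_one₀ (n := m + 1) (by linarith [hs.2] : 0 ≤ 1 - s) (by linarith [hs.1])
        have a1 := hCg _ (hmem s hs) 0 ⟨le_rfl, hT.le⟩
        rw [hg0, sub_zero, sub_zero, abs_of_nonneg (hh0 s hs), abs_of_nonneg (hmem s hs).1] at a1
        have a2 : (s * y) ^ α ≤ y ^ α := Real.rpow_le_rpow (hmem s hs).1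
          (mul_le_of_le_one_left hy0.le hs.2) hα0.le
        calc (1 - s) ^ (m + 1) * g (s * y) ≤ 1 * g (s * y) :=
              mul_le_mul_of_nonneg_right w (hh0 s hs)
          _ ≤ C * y ^ α := by
              rw [one_mul]
              exact a1.trans (by gcongr)
      · apply ContinuousOn.intervalIntegrable
        rw [Set.uIcc_of_le zero_le_one]
        exact ContinuousOn.mul (by fun_prop) hhc
    simpa using this
  have hest : ∀ δ, 0 < δ → δ ≤ 1 / 2 → ∫ s in (0:ℝ)..1, (1 - s) ^ m * g (s * y) ≤
      2 * (∫ s in (0:ℝ)..1, (1 - s) ^ (m + 1) * g (s * y)) / δ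
        + C * (y * δ) ^ α * δ ^ (m + 1) := by
    intro δ hδ hδ2
    refine integral_weight_le (fun s => g (s * y)) m δ (C * (y * δ) ^ α) hδ hδ2 hhc hh0 ?_
      (by positivity)
    intro s hs
    have a1 := hCg _ (hmem s ⟨by linarith [hs.1], hs.2⟩) _
      (hmem (s - δ) ⟨by linarith [hs.1], by linarith [hs.2]⟩)
    rw [show s * y - (s - δ) * y = y * δ by ring, abs_of_pos (mul_pos hy0 hδ)] at a1
    have a2 := (le_abs_self _).trans a1
    linarith
  generalize (∫ s in (0:ℝ)..1, (1 - s) ^ (m + 1) * g (s * y)) = I2 at *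
  generalize (∫ s in (0:ℝ)..1, (1 - s) ^ m * g (s * y)) = I1 at *
  rcases hI2.eq_or_lt with h | h
  · -- A vanishing denominator makes the quotient `0` by the convention `x / 0 = 0`.
    rw [← h, mul_zero, Real.zero_rpow, div_zero]
    · positivity
    · exact (div_pos (by linarith) (by linarith)).ne'
  apply div_rpow_le_of_forall_scale _ _ _ y p (by linarith) hC hy0 (by positivity) _ _
    (by linarith)
  · rw [hpdef, Real.rpow_add hy0, Real.rpow_natCast]
    calc y ^ (m + 2) * I2 ≤ y ^ (m + 2) * (C * y ^ α) := by gcongr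
      _ = _ := by ring
  · intro δ hδ hδ2
    have e : (y * δ) ^ (p - 1) = (y * δ) ^ (m + 1) * (y * δ) ^ α := by
      rw [show p - 1 = ((m + 1 : ℕ) : ℝ) + α by rw [hpdef]; push_cast; ring,
        Real.rpow_add (by positivity), Real.rpow_natCast]
    rw [e]
    calc y ^ (m + 1) * I1
        ≤ y ^ (m + 1) * (2 * I2 / δ + C * (y * δ) ^ α * δ ^ (m + 1)) := by
          gcongr
          exact hest δ hδ hδ2
      _ = _ := by
          rw [mul_pow]
          field_simp
          ring
end

section
/- Let T > 0, k ≥ 2 an integer, α ∈ (0,1], and let f ∈ C^{k,α}[0,T]. Assume f^{(j)}(0) = 0 for j = 0, 1, …, k, and that there is η ∈ (0,T) with f^{(k)} > 0 on (0,η] and f^{(k)} ≥ 0 on [η,T]. Let μ ∈ (1/(k+α), 1) and set β = μ(k+α) − 1, and assume β ≤ 1. Then f ≥ 0 on [0,T], f^μ is differentiable on [0,T], and (f^μ)' is Hölder continuous with exponent β at 0, i.e. there is a constant C with |(f^μ)'(y) − (f^μ)'(0)| ≤ C y^β for all y ∈ [0,T]. -/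
/-!
Since `f ^ μ` has derivative `μ f ^ (μ - 1) f'` where `f > 0`, the estimate follows from a Landau
type inequality `f' ≤ K f ^ (1 - 1 / (k + α))` together with `f x ≤ C x ^ (k + α)`: their
combination is `(f ^ μ)' ≤ C' f ^ (μ - 1 / (k + α)) ≤ C'' x ^ β`. At `0` the bound
`f ^ μ ≤ C x ^ (1 + β)` with `β > 0` shows that the derivative vanishes.

The Landau inequality is obtained by descending induction on the order of the derivative. The
induction carries the property `HalvesSlowly g r`: moving to the left of `x` by at most a fixed
multiple of `g x ^ (1 / r)`, the function `g` loses at most half of its value. For `g = f^{(k)}`,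
`r = α` this is the Hölder condition. If `F' = g ≥ 0` and `F 0 = g 0 = 0`, the property for `g`
gives `g ≤ K F ^ (r / (r + 1))`, because `F x` is at least the integral of `g` over the interval
on which `g ≥ g x / 2` (`deriv_le_rpow`); this in turn gives the property for `F` with `r + 1`
(`halvesSlowly_step`). The bound `g x ≤ C x ^ r` is the case where the left endpoint is `0`.
-/

/-- If `x - y ≤ (g x / C) ^ (1 / r)` with `y ≤ x` in `[0, T]`, then `g y ≥ g x / 2`, for some
constant `C > 0`. The condition on `x - y` is written without division or roots. -/
def HalvesSlowly (T : ℝ) (g : ℝ → ℝ) (r : ℝ) : Prop :=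
  ∃ C : ℝ, 0 < C ∧ ∀ y x : ℝ, 0 ≤ y → y ≤ x → x ≤ T → C * (x - y) ^ r ≤ g x → g x ≤ 2 * g y

lemma exists_mem_Icc_sub_eq_mul {T : ℝ} {F g : ℝ → ℝ}
    (hF : ∀ x ∈ Set.Icc 0 T, HasDerivWithinAt F (g x) (Set.Icc 0 T) x)
    {y x : ℝ} (hy : 0 ≤ y) (hyx : y ≤ x) (hx : x ≤ T) :
    ∃ z ∈ Set.Icc y x, F x - F y = g z * (x - y) := by
  rcases hyx.eq_or_lt with rfl | hlt
  · exact ⟨y, ⟨le_rfl, le_rfl⟩, by simp⟩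
  · obtain ⟨z, hz, h⟩ := exists_hasDerivAt_eq_slope F g hlt
      (fun t ht => ((hF t ⟨hy.trans ht.1, ht.2.trans hx⟩).continuousWithinAt).mono
        (Set.Icc_subset_Icc hy hx))
      (fun t ht => (hF t ⟨hy.trans ht.1.le, ht.2.le.trans hx⟩).hasDerivAt
        (Icc_mem_nhds (hy.trans_lt ht.1) (ht.2.trans_le hx)))
    refine ⟨z, ⟨hz.1.le, hz.2.le⟩, ?_⟩
    rw [h, div_mul_cancel₀ _ (sub_pos.2 hlt).ne']

lemma le_of_deriv_nonneg {T : ℝ} {F g : ℝ → ℝ}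
    (hF : ∀ x ∈ Set.Icc 0 T, HasDerivWithinAt F (g x) (Set.Icc 0 T) x)
    (hg : ∀ x ∈ Set.Icc 0 T, 0 ≤ g x)
    {y x : ℝ} (hy : 0 ≤ y) (hyx : y ≤ x) (hx : x ≤ T) : F y ≤ F x := by
  obtain ⟨z, hz, h⟩ := exists_mem_Icc_sub_eq_mul hF hy hyx hx
  have := mul_nonneg (hg z ⟨hy.trans hz.1, hz.2.trans hx⟩) (sub_nonneg.2 hyx)
  linarith

/-- If `g x > C x ^ r`, halving down to the left endpoint `0` would give `g x ≤ 2 g 0 = 0`. -/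
lemma HalvesSlowly.exists_le_rpow {T : ℝ} {g : ℝ → ℝ} {r : ℝ}
    (h : HalvesSlowly T g r) (hg0 : g 0 = 0) :
    ∃ C : ℝ, 0 < C ∧ ∀ x ∈ Set.Icc 0 T, g x ≤ C * x ^ r := by
  obtain ⟨C, hC, h⟩ := h
  refine ⟨C, hC, fun x hx => ?_⟩
  by_contra! hlt
  have h1 := h 0 x le_rfl hx.1 hx.2 (by simpa using hlt.le)
  have h2 : 0 ≤ C * x ^ r := mul_nonneg hC.le (Real.rpow_nonneg hx.1 _)
  linarith

/-- Landau type inequality `F' ≤ K F ^ (r / (r + 1))`, with `g = F'`: since `g ≥ g x / 2` on an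
interval of length `d = (g x / C) ^ (1 / r)` ending at `x`, one has `F x ≥ d * g x / 2`. -/
lemma deriv_le_rpow {T : ℝ} {F g : ℝ → ℝ} {r : ℝ} (hr : 0 < r)
    (hF : ∀ x ∈ Set.Icc 0 T, HasDerivWithinAt F (g x) (Set.Icc 0 T) x)
    (hg : ∀ x ∈ Set.Icc 0 T, 0 ≤ g x) (hF0 : F 0 = 0) (hg0 : g 0 = 0)
    (h : HalvesSlowly T g r) :
    ∃ K : ℝ, 0 < K ∧ ∀ x ∈ Set.Icc 0 T, g x ≤ K * F x ^ (r / (r + 1)) := by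
  obtain ⟨C, hC, h⟩ := h
  have hCr : 0 < C ^ (1 / r) := Real.rpow_pos_of_pos hC _
  refine ⟨(2 * C ^ (1 / r)) ^ (r / (r + 1)), by positivity, fun x hx => ?_⟩
  have hgx := hg x hx
  have hFx : 0 ≤ F x := hF0 ▸ le_of_deriv_nonneg hF hg le_rfl hx.1 hx.2
  -- `d` is the length over which `g` is guaranteed to stay above `g x / 2`
  set d := (g x / C) ^ (1 / r) with hd
  have hd0 : 0 ≤ d := by positivity
  have hdr : C * d ^ r = g x := by
    rw [hd, ← Real.rpow_mul (by positivity), one_div_mul_cancel hr.ne', Real.rpow_one]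
    field_simp
  have hdx : d ≤ x := by
    by_contra! hlt
    have h1 : x ^ r < d ^ r := Real.rpow_lt_rpow hx.1 hlt hr
    have h2 : C * x ^ r < g x := hdr ▸ mul_lt_mul_of_pos_left h1 hC
    have h3 := h 0 x le_rfl hx.1 hx.2 (by simpa using h2.le)
    have h4 : 0 ≤ C * x ^ r := mul_nonneg hC.le (Real.rpow_nonneg hx.1 _)
    linarith
  obtain ⟨z, hz, hzF⟩ := exists_mem_Icc_sub_eq_mul hF (sub_nonneg.2 hdx)
    (sub_le_self x hd0) hx.2
  have hz0 : 0 ≤ z := (sub_nonneg.2 hdx).trans hz.1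
  have hgz : g x ≤ 2 * g z := by
    refine h z x hz0 hz.2 hx.2 ?_
    rw [← hdr]
    refine mul_le_mul_of_nonneg_left (Real.rpow_le_rpow (sub_nonneg.2 hz.2) ?_ hr.le) hC.le
    linarith [hz.1]
  have hFy : 0 ≤ F (x - d) :=
    hF0 ▸ le_of_deriv_nonneg hF hg le_rfl (sub_nonneg.2 hdx) ((sub_le_self x hd0).trans hx.2)
  have key : g x * d ≤ 2 * F x := by
    have : g x * d ≤ 2 * g z * d := mul_le_mul_of_nonneg_right hgz hd0
    rw [sub_sub_cancel] at hzF
    linarith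
  have hdC : d * C ^ (1 / r) = g x ^ (1 / r) := by
    rw [hd, ← Real.mul_rpow (by positivity) hC.le, div_mul_cancel₀ _ hC.ne']
  have hpow : g x ^ ((r + 1) / r) ≤ 2 * C ^ (1 / r) * F x := by
    have e : (r + 1) / r = 1 + 1 / r := by field_simp
    rw [e, Real.rpow_add_of_nonneg hgx zero_le_one (by positivity), Real.rpow_one, ← hdC]
    have := mul_le_mul_of_nonneg_right key hCr.le
    linarith
  have := Real.rpow_le_rpow (by positivity) hpow (show 0 ≤ r / (r + 1) by positivity)
  rwa [← Real.rpow_mul hgx, Real.mul_rpow (by positivity) hFx,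
    show (r + 1) / r * (r / (r + 1)) = 1 by field_simp, Real.rpow_one] at this

/-- The inductive step: the halving property passes from a derivative to its primitive. -/
lemma halvesSlowly_step {T : ℝ} {F g : ℝ → ℝ} {r : ℝ} (hr : 0 < r)
    (hF : ∀ x ∈ Set.Icc 0 T, HasDerivWithinAt F (g x) (Set.Icc 0 T) x)
    (hg : ∀ x ∈ Set.Icc 0 T, 0 ≤ g x) (hF0 : F 0 = 0) (hg0 : g 0 = 0)
    (h : HalvesSlowly T g r) : HalvesSlowly T F (r + 1) := by
  obtain ⟨K, hK, hKF⟩ := deriv_le_rpow hr hF hg hF0 hg0 h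
  refine ⟨(2 * K) ^ (r + 1), by positivity, fun y x hy hyx hx hle => ?_⟩
  have hr1 : 0 < r + 1 := by linarith
  have hxy : 0 ≤ x - y := sub_nonneg.2 hyx
  have hpos : ∀ t, 0 ≤ t → t ≤ T → 0 ≤ F t := fun t h0 hT =>
    hF0 ▸ le_of_deriv_nonneg hF hg le_rfl h0 hT
  have hFx := hpos x (hy.trans hyx) hx
  obtain ⟨z, hz, hzF⟩ := exists_mem_Icc_sub_eq_mul hF hy hyx hx
  have hz0 := hy.trans hz.1
  have h1 : g z ≤ K * F x ^ (r / (r + 1)) :=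
    (hKF z ⟨hz0, hz.2.trans hx⟩).trans <| mul_le_mul_of_nonneg_left
      (Real.rpow_le_rpow (hpos z hz0 (hz.2.trans hx)) (le_of_deriv_nonneg hF hg hz0 hz.2 hx)
        (by positivity)) hK.le
  have h2 : 2 * K * (x - y) ≤ F x ^ (1 / (r + 1)) := by
    rw [← Real.mul_rpow (by positivity) hxy] at hle
    have := Real.rpow_le_rpow (by positivity) hle (show 0 ≤ 1 / (r + 1) by positivity)
    rwa [← Real.rpow_mul (by positivity), mul_one_div_cancel hr1.ne', Real.rpow_one] at this
  have h3 : F x ^ (1 / (r + 1)) * F x ^ (r / (r + 1)) = F x := by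
    rw [← Real.rpow_add_of_nonneg hFx (by positivity) (by positivity),
      show 1 / (r + 1) + r / (r + 1) = 1 by field_simp; ring, Real.rpow_one]
  have h4 := mul_le_mul_of_nonneg_right h1 hxy
  have h5 := mul_le_mul_of_nonneg_right h2 (Real.rpow_nonneg hFx (r / (r + 1)))
  linarith


/-- Corollary, Hölder part: If `f ∈ C^{k,α}[0,T]`, `f^{(j)}(0) = 0` for
`j = 0,…,k`, and `f^{(k)} > 0` on `(0,η]`, `f^{(k)} ≥ 0` on `[η,T]`, then for
`μ ∈ (1/(k+α),1)` with `β = μ(k+α) - 1 ≤ 1`: `f ≥ 0` on `[0,T]`, `f^μ` is differentiable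
on `[0,T]`, and `(f^μ)'` is Hölder continuous with exponent `β` at `0`. -/
theorem corollary_holder_at_zero
    (T : ℝ) (hT : 0 < T) (k : ℕ) (hk : 2 ≤ k) (α : ℝ) (hα : α ∈ Set.Ioc (0 : ℝ) 1)
    (f : ℝ → ℝ)
    (hf : ContDiffOn ℝ k f (Set.Icc 0 T))
    (hHolder : ∃ C : ℝ, ∀ x ∈ Set.Icc 0 T, ∀ y ∈ Set.Icc 0 T,
      |iteratedDerivWithin k f (Set.Icc 0 T) x - iteratedDerivWithin k f (Set.Icc 0 T) y|
        ≤ C * |x - y| ^ α)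
    (hvanish : ∀ j : ℕ, j ≤ k → iteratedDerivWithin j f (Set.Icc 0 T) 0 = 0)
    (η : ℝ) (hη : η ∈ Set.Ioo 0 T)
    (hpos : ∀ x ∈ Set.Ioc 0 η, 0 < iteratedDerivWithin k f (Set.Icc 0 T) x)
    (hnonneg : ∀ x ∈ Set.Icc η T, 0 ≤ iteratedDerivWithin k f (Set.Icc 0 T) x)
    (μ : ℝ) (hμ : μ ∈ Set.Ioo (1 / ((k : ℝ) + α)) 1)
    (β : ℝ) (hβ : β = μ * ((k : ℝ) + α) - 1) (hβ1 : β ≤ 1) :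
    (∀ x ∈ Set.Icc 0 T, 0 ≤ f x) ∧
    (∀ x ∈ Set.Icc 0 T, DifferentiableWithinAt ℝ (fun t => f t ^ μ) (Set.Icc 0 T) x) ∧
    (∃ C : ℝ, ∀ y ∈ Set.Icc 0 T,
      |derivWithin (fun t => f t ^ μ) (Set.Icc 0 T) y -
        derivWithin (fun t => f t ^ μ) (Set.Icc 0 T) 0| ≤ C * y ^ β) := by
  obtain ⟨hα0, -⟩ := hα
  set F : ℕ → ℝ → ℝ := fun j => iteratedDerivWithin j f (Set.Icc 0 T) with hFdef
  have hud : UniqueDiffOn ℝ (Set.Icc 0 T) := uniqueDiffOn_Icc hT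
  have hderiv : ∀ j, j < k → ∀ x ∈ Set.Icc 0 T,
      HasDerivWithinAt (F j) (F (j + 1) x) (Set.Icc 0 T) x := by
    intro j hj x hx
    have := (hf.differentiableOn_iteratedDerivWithin (m := j) (by exact_mod_cast hj)
      hud x hx).hasDerivWithinAt
    simpa only [hFdef, iteratedDerivWithin_succ] using this
  have h0T : (0 : ℝ) ∈ Set.Icc 0 T := ⟨le_rfl, hT.le⟩
  -- descending induction on the order `k - j` of the derivative
  have hind : ∀ j, j ≤ k → (∀ x ∈ Set.Icc 0 T, 0 ≤ F (k - j) x) ∧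
      (∀ x ∈ Set.Ioc 0 η, 0 < F (k - j) x) ∧ HalvesSlowly T (F (k - j)) (j + α) := by
    intro j
    induction j with
    | zero =>
      intro _
      refine ⟨fun x hx => ?_, fun x hx => hpos x hx, ?_⟩
      · rcases hx.1.eq_or_lt with rfl | h
        · exact (hvanish k le_rfl).ge
        · rcases le_total x η with h' | h'
          · exact (hpos x ⟨h, h'⟩).le
          · exact hnonneg x ⟨h', hx.2⟩
      · obtain ⟨C, hC⟩ := hHolder
        refine ⟨2 * (|C| + 1), by positivity, fun y x hy hyx hx hle => ?_⟩
        have h1 := (le_abs_self _).trans (hC x ⟨hy.trans hyx, hx⟩ y ⟨hy, hyx.trans hx⟩)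
        rw [abs_of_nonneg (sub_nonneg.2 hyx)] at h1
        have h2 : 0 ≤ (x - y) ^ α := Real.rpow_nonneg (sub_nonneg.2 hyx) _
        have h3 : C * (x - y) ^ α ≤ (|C| + 1) * (x - y) ^ α :=
          mul_le_mul_of_nonneg_right (by linarith [le_abs_self C]) h2
        simp only [hFdef, Nat.sub_zero, Nat.cast_zero, zero_add] at hle ⊢
        linarith
    | succ j ih =>
      intro hj
      obtain ⟨hn, hp, hs⟩ := ih (by omega)
      have hd := hderiv (k - (j + 1)) (by omega)
      rw [show k - (j + 1) + 1 = k - j by omega] at hd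
      have hv0 : F (k - (j + 1)) 0 = 0 := hvanish _ (by omega)
      have hv1 : F (k - j) 0 = 0 := hvanish _ (by omega)
      have hr : 0 < (j : ℝ) + α := by positivity
      have hn' : ∀ x ∈ Set.Icc 0 T, 0 ≤ F (k - (j + 1)) x := fun x hx =>
        hv0 ▸ le_of_deriv_nonneg hd hn le_rfl hx.1 hx.2
      refine ⟨hn', fun x hx => ?_, ?_⟩
      · have hxT : x ∈ Set.Icc 0 T := ⟨hx.1.le, hx.2.trans hη.2.le⟩
        obtain ⟨K, hK, hKF⟩ := deriv_le_rpow hr hd hn hv0 hv1 hs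
        refine (hn' x hxT).lt_of_ne fun h0 => ?_
        have h1 := hKF x hxT
        rw [← h0, Real.zero_rpow (by positivity), mul_zero] at h1
        exact absurd (hp x hx) h1.not_gt
      · have := halvesSlowly_step hr hd hn hv0 hv1 hs
        convert this using 1
        push_cast
        ring
  obtain ⟨hf0, hfpos, hfs⟩ := hind k le_rfl
  obtain ⟨hg0, -, hgs⟩ := hind (k - 1) (by omega)
  rw [Nat.sub_self] at hf0 hfpos hfs
  rw [show k - (k - 1) = 1 by omega, Nat.cast_sub (by omega), Nat.cast_one] at hgs
  rw [show k - (k - 1) = 1 by omega] at hg0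
  have hF0 : F 0 = f := by simp [hFdef]
  have hd := hderiv 0 (by omega)
  rw [hF0] at hf0 hfpos hfs hd
  rw [zero_add] at hd
  have hv0 : f 0 = 0 := by simpa using hvanish 0 (by omega)
  have hv1 : F 1 0 = 0 := hvanish 1 (by omega)
  have hk2 : (2 : ℝ) ≤ k := by exact_mod_cast hk
  have hr : 0 < (k : ℝ) - 1 + α := by linarith
  have hkα : 0 < (k : ℝ) + α := by linarith
  obtain ⟨K, hK, hKF⟩ := deriv_le_rpow hr hd hg0 hv0 hv1 hgs
  obtain ⟨C, hC, hCf⟩ := hfs.exists_le_rpow hv0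
  have hμ1 : 1 / ((k : ℝ) + α) < μ := hμ.1
  have hμ0 : 0 < μ := (by positivity : 0 < 1 / ((k : ℝ) + α)).trans hμ1
  have hβ0 : 0 < β := by
    rw [div_lt_iff₀ hkα] at hμ1
    linarith
  have hfpos' : ∀ x ∈ Set.Ioc 0 T, 0 < f x := by
    intro x hx
    rcases le_total x η with h | h
    · exact hfpos x ⟨hx.1, h⟩
    · exact (hfpos η ⟨hη.1, le_rfl⟩).trans_le (le_of_deriv_nonneg hd hg0 hη.1.le h hx.2)
  have hD0 : HasDerivWithinAt (fun t => f t ^ μ) 0 (Set.Icc 0 T) 0 := by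
    rw [hasDerivWithinAt_iff_isLittleO]
    have hO : (fun t => f t ^ μ) =O[nhdsWithin 0 (Set.Icc 0 T)] fun t : ℝ => t ^ (1 + β) := by
      refine Asymptotics.IsBigO.of_bound (C ^ μ) ?_
      filter_upwards [self_mem_nhdsWithin] with t ht
      have h := Real.rpow_le_rpow (hf0 t ht) (hCf t ht) hμ0.le
      rw [Real.mul_rpow hC.le (Real.rpow_nonneg ht.1 _), ← Real.rpow_mul ht.1,
        show ((k : ℝ) + α) * μ = 1 + β by rw [hβ]; ring] at h
      rwa [Real.norm_of_nonneg (Real.rpow_nonneg (hf0 t ht) _),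
        Real.norm_of_nonneg (Real.rpow_nonneg ht.1 _)]
    have ho : (fun t : ℝ => t ^ (1 + β)) =o[nhdsWithin 0 (Set.Icc 0 T)] fun t : ℝ => t := by
      have h1 : Filter.Tendsto (fun t : ℝ => t ^ β) (nhdsWithin 0 (Set.Icc 0 T)) (nhds 0) := by
        have := (Real.continuousAt_rpow_const 0 β (Or.inr hβ0.le)).tendsto
        rw [Real.zero_rpow hβ0.ne'] at this
        exact this.mono_left nhdsWithin_le_nhds
      have h2 := (Asymptotics.isBigO_refl (fun t : ℝ => t)
        (nhdsWithin 0 (Set.Icc 0 T))).mul_isLittleO ((Asymptotics.isLittleO_one_iff ℝ).2 h1)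
      refine (h2.congr' ?_ ?_)
      · filter_upwards [self_mem_nhdsWithin] with t ht
        rw [Real.rpow_add_of_nonneg ht.1 zero_le_one hβ0.le, Real.rpow_one]
      · exact Filter.Eventually.of_forall fun t => mul_one t
    simpa [hv0, Real.zero_rpow hμ0.ne'] using hO.trans_isLittleO ho
  have hDx : ∀ x ∈ Set.Ioc 0 T, HasDerivWithinAt (fun t => f t ^ μ)
      (F 1 x * μ * f x ^ (μ - 1)) (Set.Icc 0 T) x := fun x hx =>
    (hd x ⟨hx.1.le, hx.2⟩).rpow_const (Or.inl (hfpos' x hx).ne')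
  refine ⟨hf0, fun x hx => ?_, K * μ * C ^ (μ - 1 / (k + α)), fun x hx => ?_⟩
  · rcases hx.1.eq_or_lt with rfl | h
    · exact hD0.differentiableWithinAt
    · exact (hDx x ⟨h, hx.2⟩).differentiableWithinAt
  · have hCp : 0 < C ^ (μ - 1 / (k + α)) := Real.rpow_pos_of_pos hC _
    rw [hD0.derivWithin (hud 0 h0T), sub_zero]
    rcases hx.1.eq_or_lt with rfl | h
    · rw [hD0.derivWithin (hud 0 h0T), Real.zero_rpow hβ0.ne']
      simp
    · have hfx := hfpos' x ⟨h, hx.2⟩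
      rw [(hDx x ⟨h, hx.2⟩).derivWithin (hud x hx), abs_of_nonneg (by
        have := hg0 x hx
        positivity)]
      have h1 : F 1 x * μ * f x ^ (μ - 1) ≤ K * μ * f x ^ (μ - 1 / (k + α)) := by
        have e : f x ^ (μ - 1 / (k + α)) =
            f x ^ (((k : ℝ) - 1 + α) / (k - 1 + α + 1)) * f x ^ (μ - 1) := by
          rw [← Real.rpow_add hfx, show (k : ℝ) - 1 + α + 1 = k + α by ring]
          congr 1
          field_simp
          ring
        have := mul_le_mul_of_nonneg_right (hKF x hx)
          (show 0 ≤ μ * f x ^ (μ - 1) by positivity)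
        rw [e]
        linarith
      have h2 : f x ^ (μ - 1 / (k + α)) ≤ C ^ (μ - 1 / (k + α)) * x ^ β := by
        have := Real.rpow_le_rpow hfx.le (hCf x hx) (sub_nonneg.2 hμ1.le)
        rwa [Real.mul_rpow hC.le (Real.rpow_nonneg hx.1 _), ← Real.rpow_mul hx.1,
          show ((k : ℝ) + α) * (μ - 1 / (k + α)) = β by rw [hβ]; field_simp] at this
      calc _ ≤ _ := h1
        _ ≤ K * μ * (C ^ (μ - 1 / (k + α)) * x ^ β) :=
          mul_le_mul_of_nonneg_left h2 (by positivity)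
        _ = _ := by ring
end

section
/- Let T > 0, k ≥ 2 an integer, α ∈ (0,1], and let f ∈ C^{k,α}[0,T]. Assume f^{(j)}(0) = 0 for j = 0, 1, …, k, and that there is η ∈ (0,T) with f^{(k)} > 0 on (0,η] and f^{(k)} ≥ 0 on [η,T]. Let μ ∈ (1/(k+α), 1) with μ(k+α) − 1 ≤ 1. Then for every x ∈ (0,T], f(x) > 0 and (f^μ)' is Lipschitz continuous at x, i.e. there is a constant C (depending on x) such that |(f^μ)'(y) − (f^μ)'(x)| ≤ C|y − x| for all y ∈ [0,T]. -/
/-! Put `u n` for the `n`-th derivative of `f` on `[0, T]`. Since `u k ≥ 0` and every `u n` vanishes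
at `0`, all `u n` with `n ≤ k` are nonnegative, and those with `n < k` are nondecreasing.

The heart of the matter is the interpolation inequality
`u (n+1) ^ ((k-n+α) / (k-n-1+α)) ≤ C * u n` for `n < k`, proved by descending induction on `n`.
* For `n = k - 1` it comes from the Hölder condition (`rpow_le_of_holder`): if `u k y = a`, then
  `u k ≥ a / 2` on an interval `[y - δ, y]` with `δ` comparable to `a ^ (1/α)`; this interval lies
  in `[0, y]` because `u k 0 = 0`, so `u (k-1) y ≥ δ * a / 2`.
* The induction step (`rpow_le_of_rpow_le`) differentiates the power of `u (n+1)` on the left-hand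
  side: by the previous inequality the derivative is at most a multiple of `u (n+1)`, the
  derivative of `u n`.

Following the chain from `u k` down to `f` gives `f > 0` on `(0, η]`, hence on `(0, T]` by
monotonicity. For `n = 0` the inequality reads `f' ≤ C * f ^ (1 - 1/(k+α))`, so
`(f^μ)' = μ * f' * f ^ (μ-1) ≤ C * f ^ (μ - 1/(k+α))` is bounded on `(0, T]`. Near `x > 0` the
function `(f^μ)'` is differentiable, which gives the Lipschitz estimate close to `x`; away from `x`
boundedness suffices (`lipschitz_at_of_bounded`). -/

open Set Filter Topology

lemma monotoneOn_Icc_of_hasDerivWithinAt {T : ℝ} {F g : ℝ → ℝ}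
    (hF : ∀ x ∈ Icc 0 T, HasDerivWithinAt F (g x) (Icc 0 T) x)
    (hg : ∀ x ∈ Icc 0 T, 0 ≤ g x) : MonotoneOn F (Icc 0 T) :=
  monotoneOn_of_hasDerivWithinAt_nonneg (convex_Icc 0 T)
    (fun x hx => (hF x hx).continuousWithinAt)
    (fun x hx => (hF x (interior_subset hx)).mono interior_subset)
    (fun x hx => hg x (interior_subset hx))

/-- Base case of the interpolation inequality: a nonnegative `α`-Hölder function vanishing at `0`
is controlled by a power of its primitive. -/
lemma rpow_le_of_holder {T α C₀ : ℝ} (hα : 0 < α) {G g : ℝ → ℝ}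
    (hG : ∀ x ∈ Icc 0 T, HasDerivWithinAt G (g x) (Icc 0 T) x)
    (hg : ∀ x ∈ Icc 0 T, 0 ≤ g x) (hg0 : g 0 = 0) (hG0 : G 0 = 0)
    (hH : ∀ x ∈ Icc 0 T, ∀ y ∈ Icc 0 T, |g x - g y| ≤ C₀ * |x - y| ^ α) :
    ∃ C : ℝ, 0 ≤ C ∧ ∀ x ∈ Icc 0 T, g x ^ ((1 + α) / α) ≤ C * G x := by
  obtain ⟨K, hK, hCK⟩ : ∃ K : ℝ, 0 < K ∧ C₀ ≤ K :=
    ⟨max C₀ 1, lt_max_of_lt_right one_pos, le_max_left _ _⟩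
  replace hH : ∀ x ∈ Icc 0 T, ∀ y ∈ Icc 0 T, |g x - g y| ≤ K * |x - y| ^ α := fun x hx y hy =>
    (hH x hx y hy).trans (by gcongr)
  have hmono := monotoneOn_Icc_of_hasDerivWithinAt hG hg
  refine ⟨2 * (2 * K) ^ (1 / α), by positivity, fun y hy => ?_⟩
  have h0 : (0 : ℝ) ∈ Icc 0 T := ⟨le_rfl, hy.1.trans hy.2⟩
  have hGy : 0 ≤ G y := hG0 ▸ hmono h0 hy hy.1
  rcases (hg y hy).eq_or_lt with ha | ha
  · rw [← ha, Real.zero_rpow (by positivity)]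
    positivity
  set a := g y with ha'
  set δ := (a / (2 * K)) ^ (1 / α) with hδ
  have hδ0 : 0 < δ := by positivity
  have hδα : δ ^ α = a / (2 * K) := by
    rw [hδ, ← Real.rpow_mul (by positivity), one_div_mul_cancel hα.ne', Real.rpow_one]
  have hδy : δ ≤ y := by
    have h1 := hH y hy 0 h0
    rw [hg0, sub_zero, sub_zero, abs_of_nonneg hy.1, abs_of_pos ha] at h1
    rw [← Real.rpow_le_rpow_iff hδ0.le hy.1 hα, hδα, div_le_iff₀ (by positivity)]
    nlinarith [Real.rpow_nonneg hy.1 α]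
  have hsub : Icc (y - δ) y ⊆ Icc 0 T := Icc_subset_Icc (by linarith) hy.2
  have hlow : ∀ t ∈ Icc (y - δ) y, a / 2 ≤ g t := by
    intro t ht
    have h1 := hH y hy t (hsub ht)
    have h2 : |y - t| ^ α ≤ δ ^ α := by
      rw [abs_of_nonneg (by linarith [ht.2])]
      exact Real.rpow_le_rpow (by linarith [ht.2]) (by linarith [ht.1]) hα.le
    have h3 : K * |y - t| ^ α ≤ a / 2 := by
      calc K * |y - t| ^ α ≤ K * (a / (2 * K)) := by rw [← hδα]; gcongr
        _ = a / 2 := by field_simp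
    linarith [le_abs_self (g y - g t)]
  obtain ⟨c, hc, hceq⟩ := exists_hasDerivAt_eq_slope G g (show y - δ < y by linarith)
    (fun t ht => ((hG t (hsub ht)).mono hsub).continuousWithinAt)
    (fun t ht => ((hG t (hsub (Ioo_subset_Icc_self ht))).mono hsub).hasDerivAt
      (Icc_mem_nhds ht.1 ht.2))
  have h4 := hlow c (Ioo_subset_Icc_self hc)
  rw [hceq, sub_sub_cancel, le_div_iff₀ hδ0] at h4
  have h5 : 0 ≤ G (y - δ) :=
    hG0 ▸ hmono h0 (hsub ⟨le_rfl, by linarith⟩) (by linarith)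
  have h6 : a ^ ((1 + α) / α) = (2 * K) ^ (1 / α) * δ * a := by
    rw [hδ, ← Real.mul_rpow (by positivity) (by positivity), mul_div_cancel₀ _ (by positivity),
      add_div, div_self hα.ne', Real.rpow_add ha, Real.rpow_one]
  rw [h6]
  have h7 : 0 < (2 * K) ^ (1 / α) := by positivity
  nlinarith

/-- Induction step of the interpolation inequality, for `h₂' = h₁` and `h₁' = h₀`: the derivative
of `h₁ ^ ((s+2)/(s+1))` is a multiple of `h₁ ^ (1/(s+1)) * h₀`, which the hypothesis bounds by a
multiple of `h₁`. -/
lemma rpow_le_of_rpow_le {T s C : ℝ} (hs : 0 < s) (hC : 0 ≤ C) {h₀ h₁ h₂ : ℝ → ℝ}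
    (hd₂ : ∀ x ∈ Icc 0 T, HasDerivWithinAt h₂ (h₁ x) (Icc 0 T) x)
    (hd₁ : ∀ x ∈ Icc 0 T, HasDerivWithinAt h₁ (h₀ x) (Icc 0 T) x)
    (hp₀ : ∀ x ∈ Icc 0 T, 0 ≤ h₀ x) (hp₁ : ∀ x ∈ Icc 0 T, 0 ≤ h₁ x)
    (hz₁ : h₁ 0 = 0) (hz₂ : h₂ 0 = 0)
    (h : ∀ x ∈ Icc 0 T, h₀ x ^ ((1 + s) / s) ≤ C * h₁ x) :
    ∃ C' : ℝ, 0 ≤ C' ∧ ∀ x ∈ Icc 0 T, h₁ x ^ ((1 + (1 + s)) / (1 + s)) ≤ C' * h₂ x := by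
  set q := (1 + (1 + s)) / (1 + s) with hq
  have hq1 : q - 1 = 1 / (1 + s) := by rw [hq]; field_simp; ring
  have hq0 : 1 ≤ q := by
    have : 0 < 1 / (1 + s) := by positivity
    linarith
  set C' := q * C ^ (s / (1 + s)) with hC'
  refine ⟨C', by positivity, ?_⟩
  have hmono : MonotoneOn (fun x => C' * h₂ x - h₁ x ^ q) (Icc 0 T) := by
    refine monotoneOn_Icc_of_hasDerivWithinAt
      (g := fun x => C' * h₁ x - h₀ x * q * h₁ x ^ (q - 1)) (fun x hx => ?_) (fun x hx => ?_)
    · exact ((hd₂ x hx).const_mul C').sub ((hd₁ x hx).rpow_const (Or.inr hq0))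
    · have h1 : h₀ x ≤ C ^ (s / (1 + s)) * h₁ x ^ (s / (1 + s)) := by
        rw [← Real.mul_rpow hC (hp₁ x hx)]
        calc h₀ x = (h₀ x ^ ((1 + s) / s)) ^ (s / (1 + s)) := by
              rw [← Real.rpow_mul (hp₀ x hx), div_mul_div_cancel₀ hs.ne',
                div_self (by positivity), Real.rpow_one]
          _ ≤ _ := Real.rpow_le_rpow (Real.rpow_nonneg (hp₀ x hx) _) (h x hx) (by positivity)
      have h2 : h₁ x ^ (s / (1 + s)) * h₁ x ^ (q - 1) = h₁ x := by
        have e : s / (1 + s) + (q - 1) = 1 := by rw [hq1]; field_simp; ring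
        rw [← Real.rpow_add' (hp₁ x hx) (by rw [e]; exact one_ne_zero), e, Real.rpow_one]
      have h3 : h₀ x * q * h₁ x ^ (q - 1) ≤
          C ^ (s / (1 + s)) * h₁ x ^ (s / (1 + s)) * q * h₁ x ^ (q - 1) := by
        have := Real.rpow_nonneg (hp₁ x hx) (q - 1)
        gcongr
      have h4 : C ^ (s / (1 + s)) * h₁ x ^ (s / (1 + s)) * q * h₁ x ^ (q - 1) = C' * h₁ x := by
        rw [hC']
        linear_combination (q * C ^ (s / (1 + s))) * h2
      linarith
  intro x hx
  have := hmono ⟨le_rfl, hx.1.trans hx.2⟩ hx hx.1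
  simp only [hz₁, hz₂, Real.zero_rpow (show q ≠ 0 by linarith)] at this
  linarith

/-- A bounded function that coincides, at the points of `s` near `x`, with a function
differentiable at `x` satisfies a Lipschitz estimate centred at `x`. -/
lemma lipschitz_at_of_bounded {s : Set ℝ} {x M : ℝ} (hx : x ∈ s) {g h : ℝ → ℝ}
    (hM : ∀ y ∈ s, |g y| ≤ M) (hgh : g =ᶠ[𝓝[s] x] h) (hh : DifferentiableWithinAt ℝ h s x) :
    ∃ C : ℝ, ∀ y ∈ s, |g y - g x| ≤ C * |y - x| := by
  have hg : DifferentiableWithinAt ℝ g s x :=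
    hh.congr_of_eventuallyEq hgh (hgh.eq_of_nhdsWithin hx)
  obtain ⟨C, hC⟩ := hg.isBigO_sub.bound
  obtain ⟨ε, hε, hball⟩ := Metric.mem_nhdsWithin_iff.1 hC
  have hM0 : 0 ≤ M := (abs_nonneg _).trans (hM x hx)
  refine ⟨max C (2 * M / ε), fun y hy => ?_⟩
  by_cases hyx : |y - x| < ε
  · have h1 : |g y - g x| ≤ C * |y - x| := hball ⟨by simpa [Real.dist_eq] using hyx, hy⟩
    exact h1.trans (by gcongr; exact le_max_left _ _)
  · have h1 : |g y - g x| ≤ 2 * M := by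
      linarith [abs_sub (g y) (g x), hM y hy, hM x hx]
    calc |g y - g x| ≤ 2 * M / ε * ε := by rwa [div_mul_cancel₀ _ hε.ne']
      _ ≤ max C (2 * M / ε) * |y - x| := by
        gcongr
        · exact le_max_right _ _
        · exact not_lt.1 hyx


/-- Corollary, Lipschitz part: Under the hypotheses of the Corollary,
for `μ ∈ (1/(k+α),1)` with `μ(k+α) - 1 ≤ 1`, every `x ∈ (0,T]` satisfies `f(x) > 0`
and `(f^μ)'` is Lipschitz continuous at `x`. -/
theorem corollary_lipschitz_at_pos
    (T : ℝ) (hT : 0 < T) (k : ℕ) (hk : 2 ≤ k) (α : ℝ) (hα : α ∈ Set.Ioc (0 : ℝ) 1)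
    (f : ℝ → ℝ)
    (hf : ContDiffOn ℝ k f (Set.Icc 0 T))
    (hHolder : ∃ C : ℝ, ∀ x ∈ Set.Icc 0 T, ∀ y ∈ Set.Icc 0 T,
      |iteratedDerivWithin k f (Set.Icc 0 T) x - iteratedDerivWithin k f (Set.Icc 0 T) y|
        ≤ C * |x - y| ^ α)
    (hvanish : ∀ j : ℕ, j ≤ k → iteratedDerivWithin j f (Set.Icc 0 T) 0 = 0)
    (η : ℝ) (hη : η ∈ Set.Ioo 0 T)
    (hpos : ∀ x ∈ Set.Ioc 0 η, 0 < iteratedDerivWithin k f (Set.Icc 0 T) x)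
    (hnonneg : ∀ x ∈ Set.Icc η T, 0 ≤ iteratedDerivWithin k f (Set.Icc 0 T) x)
    (μ : ℝ) (hμ : μ ∈ Set.Ioo (1 / ((k : ℝ) + α)) 1)
    (hβ1 : μ * ((k : ℝ) + α) - 1 ≤ 1) :
    ∀ x ∈ Set.Ioc 0 T, 0 < f x ∧
      ∃ C : ℝ, ∀ y ∈ Set.Icc 0 T,
        |derivWithin (fun t => f t ^ μ) (Set.Icc 0 T) y -
          derivWithin (fun t => f t ^ μ) (Set.Icc 0 T) x| ≤ C * |y - x| := by
  set u : ℕ → ℝ → ℝ := fun n => iteratedDerivWithin n f (Icc 0 T) with hu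
  have hu0 : u 0 = f := iteratedDerivWithin_zero
  have hk0 : (0 : ℝ) < k := by exact_mod_cast (by omega : 0 < k)
  have hα0 : 0 < α := hα.1
  have hUD : UniqueDiffOn ℝ (Icc 0 T) := uniqueDiffOn_Icc hT
  have h0T : (0 : ℝ) ∈ Icc 0 T := ⟨le_rfl, hT.le⟩
  have hder : ∀ n, n < k → ∀ x ∈ Icc 0 T, HasDerivWithinAt (u n) (u (n + 1) x) (Icc 0 T) x := by
    intro n hn x hx
    have h1 : u (n + 1) x = derivWithin (u n) (Icc 0 T) x := by
      rw [hu]; exact congrFun iteratedDerivWithin_succ x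
    rw [h1]
    exact (hf.differentiableOn_iteratedDerivWithin (by exact_mod_cast hn) hUD x hx).hasDerivWithinAt
  have hknn : ∀ x ∈ Icc 0 T, 0 ≤ u k x := by
    intro x hx
    rcases hx.1.eq_or_lt with h | h
    · exact (h ▸ hvanish k le_rfl : u k x = 0).ge
    rcases le_total x η with h' | h'
    · exact (hpos x ⟨h, h'⟩).le
    · exact hnonneg x ⟨h', hx.2⟩
  have hnn : ∀ d n, n + d = k → ∀ x ∈ Icc 0 T, 0 ≤ u n x := by
    intro d
    induction d with
    | zero => rintro n rfl; exact hknn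
    | succ d ih =>
      intro n hn x hx
      have := monotoneOn_Icc_of_hasDerivWithinAt (hder n (by omega)) (ih (n + 1) (by omega))
        h0T hx hx.1
      rwa [show u n 0 = 0 from hvanish n (by omega)] at this
  have key : ∀ d n, n + 1 + d = k → ∃ C : ℝ, 0 ≤ C ∧ ∀ x ∈ Icc 0 T,
      u (n + 1) x ^ ((1 + (d + α)) / (d + α)) ≤ C * u n x := by
    intro d
    induction d with
    | zero =>
      rintro n rfl
      obtain ⟨C₀, hH⟩ := hHolder
      have := rpow_le_of_holder hα0 (hder n (by omega)) hknn (hvanish _ le_rfl)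
        (hvanish n (by omega)) hH
      simpa using this
    | succ d ih =>
      intro n hn
      obtain ⟨C, hC, h⟩ := ih (n + 1) (by omega)
      have := rpow_le_of_rpow_le (by positivity) hC (hder n (by omega)) (hder (n + 1) (by omega))
        (hnn d (n + 1 + 1) (by omega)) (hnn (d + 1) (n + 1) (by omega))
        (hvanish (n + 1) (by omega)) (hvanish n (by omega)) h
      rwa [show (1 : ℝ) + (d + α) = ((d + 1 : ℕ) : ℝ) + α by push_cast; ring] at this
  have hposη : ∀ d n, n + d = k → ∀ x ∈ Ioc 0 η, 0 < u n x := by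
    intro d
    induction d with
    | zero => rintro n rfl; exact hpos
    | succ d ih =>
      intro n hn x hx
      have hxT : x ∈ Icc 0 T := ⟨hx.1.le, hx.2.trans hη.2.le⟩
      obtain ⟨C, hC, h⟩ := key d n (by omega)
      have h1 := (Real.rpow_pos_of_pos (ih (n + 1) (by omega) x hx) _).trans_le (h x hxT)
      exact pos_of_mul_pos_right h1 hC
  have hfmono : MonotoneOn f (Icc 0 T) := hu0 ▸
    monotoneOn_Icc_of_hasDerivWithinAt (hder 0 (by omega)) (hnn (k - 1) (0 + 1) (by omega))
  have hfpos : ∀ x ∈ Ioc 0 T, 0 < f x := by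
    intro x hx
    have h1 : 0 < min x η := lt_min hx.1 hη.1
    refine lt_of_lt_of_le (hu0 ▸ hposη k 0 (by omega) (min x η) ⟨h1, min_le_right _ _⟩)
      (hfmono ⟨h1.le, (min_le_left _ _).trans hx.2⟩ (Ioc_subset_Icc_self hx) (min_le_left _ _))
  have hf1 : ∀ x ∈ Icc 0 T, HasDerivWithinAt f (u 1 x) (Icc 0 T) x := by
    have := hder 0 (by omega)
    rwa [hu0] at this
  have hgder : ∀ x ∈ Ioc 0 T,
      derivWithin (fun t => f t ^ μ) (Icc 0 T) x = u 1 x * μ * f x ^ (μ - 1) := fun x hx =>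
    ((hf1 x (Ioc_subset_Icc_self hx)).rpow_const (Or.inl (hfpos x hx).ne')).derivWithin
      (hUD x (Ioc_subset_Icc_self hx))
  have hμ0 : 0 < μ := lt_trans (by positivity) hμ.1
  obtain ⟨M, hM⟩ : ∃ M : ℝ, ∀ x ∈ Icc 0 T, |derivWithin (fun t => f t ^ μ) (Icc 0 T) x| ≤ M := by
    obtain ⟨C, hC, h⟩ := key (k - 1) 0 (by omega)
    rw [Nat.cast_sub (by omega), Nat.cast_one, zero_add, hu0] at h
    set r : ℝ := (k : ℝ) - 1 + α with hr
    have hr0 : 0 < r := by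
      have : (2 : ℝ) ≤ k := by exact_mod_cast hk
      linarith
    have hkr : (k : ℝ) + α = 1 + r := by rw [hr]; ring
    have hexp : 0 ≤ r / (1 + r) + (μ - 1) := by
      have h1 := hμ.1
      rw [hkr] at h1
      have h2 : r / (1 + r) = 1 - 1 / (1 + r) := by field_simp; ring
      linarith
    -- At `0` the value of `derivWithin` is irrelevant: it is absorbed into the bound.
    refine ⟨max |derivWithin (fun t => f t ^ μ) (Icc 0 T) 0|
      (C ^ (r / (1 + r)) * μ * f T ^ (r / (1 + r) + (μ - 1))), fun x hx => ?_⟩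
    rcases hx.1.eq_or_lt with hx0 | hx0
    · rw [← hx0]; exact le_max_left _ _
    refine le_trans ?_ (le_max_right _ _)
    have hfx := hfpos x ⟨hx0, hx.2⟩
    have hux : 0 ≤ u 1 x := hnn (k - 1) 1 (by omega) x hx
    rw [hgder x ⟨hx0, hx.2⟩, abs_of_nonneg (by positivity)]
    have h1 : u 1 x ≤ C ^ (r / (1 + r)) * f x ^ (r / (1 + r)) := by
      rw [← Real.mul_rpow hC hfx.le]
      calc u 1 x = (u 1 x ^ ((1 + r) / r)) ^ (r / (1 + r)) := by
            rw [← Real.rpow_mul hux, div_mul_div_cancel₀ hr0.ne',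
              div_self (by positivity), Real.rpow_one]
        _ ≤ _ := Real.rpow_le_rpow (Real.rpow_nonneg hux _) (h x hx) (by positivity)
    calc u 1 x * μ * f x ^ (μ - 1)
        ≤ C ^ (r / (1 + r)) * f x ^ (r / (1 + r)) * μ * f x ^ (μ - 1) := by gcongr
      _ = C ^ (r / (1 + r)) * μ * f x ^ (r / (1 + r) + (μ - 1)) := by
          rw [Real.rpow_add hfx]; ring
      _ ≤ C ^ (r / (1 + r)) * μ * f T ^ (r / (1 + r) + (μ - 1)) := by
          have := hfmono hx ⟨hT.le, le_rfl⟩ hx.2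
          gcongr
  intro x hx
  have hxT := Ioc_subset_Icc_self hx
  refine ⟨hfpos x hx, lipschitz_at_of_bounded (h := fun y => u 1 y * μ * f y ^ (μ - 1)) hxT hM ?_ ?_⟩
  · filter_upwards [self_mem_nhdsWithin, mem_nhdsWithin_of_mem_nhds (Ioi_mem_nhds hx.1)]
      with y hy hy0
    exact hgder y ⟨hy0, hy.2⟩
  · exact ((hder 1 (by omega) x hxT).mul_const μ).mul
      ((hf1 x hxT).rpow_const (Or.inl (hfpos x hx).ne')) |>.differentiableWithinAt
end

section
/- Let T > 0, k ≥ 2 an integer, and let f : [0,T] → ℝ be k times continuously differentiable with f^{(k)} ≥ 0 on [0,T] and f^{(k)} not identically zero on any interval (0,η]. Fix y ∈ (0,T] with ∫₀¹ (1−s)^{k−2} f^{(k)}(sy) ds > 0, and let ε satisfy 0 < ε < min(1, ((k−1)/(2‖f^{(k)}‖_∞) ∫₀¹ (1−s)^{k−2} f^{(k)}(sy) ds)^{1/(k−1)}), where ‖f^{(k)}‖_∞ = sup_{[0,T]} |f^{(k)}|. Then ∫₀¹ (1−s)^{k−1} f^{(k)}(sy) ds ≥ (ε/2) ∫₀¹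 (1−s)^{k−2} f^{(k)}(sy) ds. -/
/-!
Write `g s = f^{(k)}(s y)`, `M = ‖f^{(k)}‖_∞`, `I = ∫₀¹ (1-s)^{k-2} g` and split `[0,1]` at `1 - ε`.
On `[0, 1-ε]` the extra factor `1 - s` is at least `ε`, so
`∫₀¹ (1-s)^{k-1} g ≥ ε ∫₀^{1-ε} (1-s)^{k-2} g = ε (I - ∫_{1-ε}^1 (1-s)^{k-2} g)`,
and the tail integral is at most `M ε^{k-1}/(k-1)`, which the smallness of `ε` bounds by `I/2`.
The lemma `weighted_integral_lower_bound` carries this out for a general continuous `g` with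
values in `[0, M]`; the theorem only has to unpack the condition on `ε`.
-/

open intervalIntegral in
/-- The splitting argument, with `m = k - 2`; the hypothesis `hsmall` says that
`M ε^{m+1}/(m+1)`, the bound for the tail integral over `[1-ε, 1]`, is at most half of the
full integral. -/
lemma weighted_integral_lower_bound (m : ℕ) (g : ℝ → ℝ) (M ε : ℝ)
    (hg : ContinuousOn g (Set.Icc 0 1)) (h0 : ∀ s ∈ Set.Icc (0 : ℝ) 1, 0 ≤ g s)
    (hM : ∀ s ∈ Set.Icc (0 : ℝ) 1, g s ≤ M) (hε0 : 0 < ε) (hε1 : ε < 1)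
    (hsmall : M * (ε ^ (m + 1) / (m + 1)) ≤ (∫ s in (0 : ℝ)..1, (1 - s) ^ m * g s) / 2) :
    (ε / 2) * (∫ s in (0 : ℝ)..1, (1 - s) ^ m * g s) ≤
      ∫ s in (0 : ℝ)..1, (1 - s) ^ (m + 1) * g s := by
  have hint : ∀ (n : ℕ) (a b : ℝ), 0 ≤ a → a ≤ b → b ≤ 1 →
      IntervalIntegrable (fun s => (1 - s) ^ n * g s) MeasureTheory.volume a b := by
    intro n a b ha hab hb
    apply ContinuousOn.intervalIntegrable
    rw [Set.uIcc_of_le hab]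
    exact (by fun_prop : ContinuousOn (fun s : ℝ => (1 - s) ^ n) _).mul
      (hg.mono (Set.Icc_subset_Icc ha hb))
  have hδ0 : 0 ≤ 1 - ε := by linarith
  have hδ1 : 1 - ε ≤ 1 := by linarith
  have hsplit : ∀ n : ℕ, (∫ s in (0 : ℝ)..(1 - ε), (1 - s) ^ n * g s) +
      (∫ s in (1 - ε)..1, (1 - s) ^ n * g s) = ∫ s in (0 : ℝ)..1, (1 - s) ^ n * g s := fun n =>
    integral_add_adjacent_intervals (hint n _ _ le_rfl hδ0 hδ1) (hint n _ _ hδ0 hδ1 le_rfl)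
  have hmain : ε * (∫ s in (0 : ℝ)..(1 - ε), (1 - s) ^ m * g s) ≤
      ∫ s in (0 : ℝ)..(1 - ε), (1 - s) ^ (m + 1) * g s := by
    rw [← integral_const_mul]
    apply integral_mono_on hδ0 ((hint m _ _ le_rfl hδ0 hδ1).const_mul ε)
      (hint (m + 1) _ _ le_rfl hδ0 hδ1)
    intro s hs
    have h1s : ε ≤ 1 - s := by linarith [hs.2]
    have hgs := h0 s ⟨hs.1, by linarith⟩
    have hp : 0 ≤ (1 - s) ^ m * g s := mul_nonneg (pow_nonneg (by linarith) _) hgs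
    calc ε * ((1 - s) ^ m * g s) ≤ (1 - s) * ((1 - s) ^ m * g s) :=
          mul_le_mul_of_nonneg_right h1s hp
      _ = (1 - s) ^ (m + 1) * g s := by ring
  have htail0 : 0 ≤ ∫ s in (1 - ε)..1, (1 - s) ^ (m + 1) * g s := by
    apply integral_nonneg hδ1
    intro s hs
    exact mul_nonneg (pow_nonneg (by linarith [hs.2]) _) (h0 s ⟨by linarith [hs.1], hs.2⟩)
  have hpow : ∫ s in (1 - ε)..1, (1 - s) ^ m = ε ^ (m + 1) / (m + 1) := by
    rw [integral_comp_sub_left (fun u : ℝ => u ^ m) 1, integral_pow]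
    simp
  have htail : (∫ s in (1 - ε)..1, (1 - s) ^ m * g s) ≤ M * (ε ^ (m + 1) / (m + 1)) := by
    rw [← hpow, ← integral_const_mul]
    apply integral_mono_on hδ1 (hint m _ _ hδ0 hδ1 le_rfl)
      (Continuous.intervalIntegrable (by fun_prop) _ _)
    intro s hs
    rw [mul_comm M]
    exact mul_le_mul_of_nonneg_left (hM s ⟨by linarith [hs.1], hs.2⟩)
      (pow_nonneg (by linarith [hs.2]) _)
  have e1 := hsplit m
  have e2 := hsplit (m + 1)
  nlinarith


/-- For `f` k-times continuously differentiable on `[0,T]` with `f^{(k)} ≥ 0`,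
`f^{(k)}` not identically zero on any interval `(0,η]`, `y ∈ (0,T]` with
`∫₀¹ (1-s)^{k-2} f^{(k)}(sy) ds > 0`, and
`0 < ε < min(1, ((k-1)/(2‖f^{(k)}‖_∞) ∫₀¹ (1-s)^{k-2} f^{(k)}(sy) ds)^{1/(k-1)})`, one has
`∫₀¹ (1-s)^{k-1} f^{(k)}(sy) ds ≥ (ε/2) ∫₀¹ (1-s)^{k-2} f^{(k)}(sy) ds`. -/
theorem integral_lower_bound
    (T : ℝ) (hT : 0 < T) (k : ℕ) (hk : 2 ≤ k)
    (f : ℝ → ℝ)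
    (hf : ContDiffOn ℝ k f (Set.Icc 0 T))
    (hnonneg : ∀ x ∈ Set.Icc 0 T, 0 ≤ iteratedDerivWithin k f (Set.Icc 0 T) x)
    (hnz : ∀ η : ℝ, 0 < η → η ≤ T →
      ∃ t ∈ Set.Ioc 0 η, iteratedDerivWithin k f (Set.Icc 0 T) t ≠ 0)
    (y : ℝ) (hy : y ∈ Set.Ioc 0 T)
    (hIpos : 0 < ∫ s in (0:ℝ)..1, (1 - s) ^ (k - 2) * iteratedDerivWithin k f (Set.Icc 0 T) (s * y))
    (ε : ℝ) (hε0 : 0 < ε)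
    (hε1 : ε < min 1
      (((((k : ℝ) - 1) /
          (2 * sSup ((fun t => |iteratedDerivWithin k f (Set.Icc 0 T) t|) '' Set.Icc 0 T))) *
        (∫ s in (0:ℝ)..1, (1 - s) ^ (k - 2) * iteratedDerivWithin k f (Set.Icc 0 T) (s * y)))
          ^ (1 / ((k : ℝ) - 1)))) :
    (∫ s in (0:ℝ)..1, (1 - s) ^ (k - 1) * iteratedDerivWithin k f (Set.Icc 0 T) (s * y)) ≥
      (ε / 2) *
        ∫ s in (0:ℝ)..1, (1 - s) ^ (k - 2) * iteratedDerivWithin k f (Set.Icc 0 T) (s * y) := by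
  obtain ⟨m, rfl⟩ : ∃ m, k = m + 2 := ⟨k - 2, by omega⟩
  have hcont : ContinuousOn (iteratedDerivWithin (m + 2) f (Set.Icc 0 T)) (Set.Icc 0 T) :=
    hf.continuousOn_iteratedDerivWithin le_rfl (uniqueDiffOn_Icc hT)
  set F := iteratedDerivWithin (m + 2) f (Set.Icc 0 T) with hF
  set M := sSup ((fun t => |F t|) '' Set.Icc 0 T) with hMdef
  have hFM : ∀ x ∈ Set.Icc 0 T, F x ≤ M := fun x hx =>
    (le_abs_self _).trans
      (le_csSup (isCompact_Icc.image_of_continuousOn hcont.abs).bddAbove ⟨x, hx, rfl⟩)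
  have hmaps : ∀ s ∈ Set.Icc (0 : ℝ) 1, s * y ∈ Set.Icc 0 T := fun s hs =>
    ⟨mul_nonneg hs.1 hy.1.le, by nlinarith [hs.1, hs.2, hy.1, hy.2]⟩
  have hk1 : ((m + 2 : ℕ) : ℝ) - 1 = ((m + 1 : ℕ) : ℝ) := by push_cast; ring
  rw [hk1] at hε1
  simp only [show m + 2 - 2 = m by omega, show m + 2 - 1 = m + 1 by omega] at *
  set I := ∫ s in (0 : ℝ)..1, (1 - s) ^ m * F (s * y) with hI
  have hεone : ε < 1 := hε1.trans_le (min_le_left _ _)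
  have hεA := hε1.trans_le (min_le_right _ _)
  have h0mem : (0 : ℝ) ∈ Set.Icc 0 T := ⟨le_rfl, hT.le⟩
  -- `M = 0` would make the upper bound on `ε` equal to `0`, because `x / 0 = 0`.
  have hMpos : 0 < M := by
    rcases ((hnonneg 0 h0mem).trans (hFM 0 h0mem)).lt_or_eq with h | h
    · exact h
    · rw [← h, mul_zero, div_zero, zero_mul, Real.zero_rpow (by positivity)] at hεA
      linarith
  have hA0 : 0 ≤ ((m + 1 : ℕ) : ℝ) / (2 * M) * I := by positivity
  have hpow : ε ^ (m + 1) ≤ ((m + 1 : ℕ) : ℝ) / (2 * M) * I := by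
    have h := pow_le_pow_left₀ hε0.le hεA.le (m + 1)
    rwa [one_div, Real.rpow_inv_natCast_pow hA0 (by omega)] at h
  apply weighted_integral_lower_bound m (fun s => F (s * y)) M ε
    (hcont.comp (by fun_prop) hmaps) (fun s hs => hnonneg _ (hmaps s hs))
    (fun s hs => hFM _ (hmaps s hs)) hε0 hεone
  calc M * (ε ^ (m + 1) / (m + 1))
      ≤ M * ((((m + 1 : ℕ) : ℝ) / (2 * M) * I) / (m + 1)) := by gcongr
    _ = I / 2 := by push_cast; field_simp
end

section
/- Let k ≥ 2 be an integer, define β₀ = 0 and β_j = (1/(j+1))(β_{j−1} + 1/(j+1)!) for j = 1, …, k, let T ∈ (0,1], and define f : [0,T] → ℝ by f(x) = −(x^{k+1}/(k+1)!) ln x + β_k x^{k+1} for x ∈ (0,T] and f(0) = 0. Then f is k times continuously differentiable on [0,T], f^{(j)}(0) = 0 for j = 0, 1, …, k, and f^{(k)}(x) = −x ln x for x ∈ (0,T]. -/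
/-!
The functions `g_j(x) = -(x^{j+1}/(j+1)!) log x + β_j x^{j+1}` satisfy `g_{j+1}' = g_j`: away from `0`
this is the product rule together with the recursion for `β`. Since `x log x` extends continuously
to `0` (with Mathlib's convention `log 0 = 0`), all `g_j` are continuous on `ℝ`, so the identity
`g_{j+1}' = g_j` extends to the point `0` as well (`logPrimitive_hasDerivAt`). As `f = g_k` on `[0,T]`,
the `j`-th derivative of `f` within `[0,T]` is `g_{k-j}`; it vanishes at `0`, and `g_0 = -x log x`.
-/

/-- The function `-(x^(j+1)/(j+1)!) log x + b x^(j+1)` on all of `ℝ`; it takes the value `0` at `0`. -/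
noncomputable def logPrimitive (b : ℝ) (j : ℕ) (x : ℝ) : ℝ :=
  -(x ^ (j + 1) / (Nat.factorial (j + 1) : ℝ)) * Real.log x + b * x ^ (j + 1)

lemma logPrimitive_zero (b : ℝ) (j : ℕ) : logPrimitive b j 0 = 0 := by
  simp [logPrimitive]

lemma logPrimitive_continuous (b : ℝ) (j : ℕ) : Continuous (logPrimitive b j) := by
  have h : logPrimitive b j = fun x : ℝ =>
      -(x ^ j / (Nat.factorial (j + 1) : ℝ)) * (x * Real.log x) + b * x ^ (j + 1) := by
    funext x
    simp only [logPrimitive]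
    ring
  rw [h]
  have := Real.continuous_mul_log
  fun_prop

/-- The recursion `hbc` makes `logPrimitive c j` the derivative of `logPrimitive b (j + 1)`, also at
`0`, because both functions are continuous there. -/
lemma logPrimitive_hasDerivAt {b c : ℝ} {j : ℕ}
    (hbc : b = (1 / ((j : ℝ) + 2)) * (c + 1 / (Nat.factorial (j + 2) : ℝ))) (x : ℝ) :
    HasDerivAt (logPrimitive b (j + 1)) (logPrimitive c j x) x := by
  have hne : ∀ y : ℝ, y ≠ 0 → HasDerivAt (logPrimitive b (j + 1)) (logPrimitive c j y) y := by
    intro y hy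
    have h1 : HasDerivAt (fun x : ℝ => x ^ (j + 1 + 1)) (((j + 1 + 1 : ℕ) : ℝ) * y ^ (j + 1)) y := by
      simpa using hasDerivAt_pow (j + 1 + 1) y
    have h2 := ((h1.div_const (Nat.factorial (j + 1 + 1) : ℝ)).neg.mul
      (Real.hasDerivAt_log hy)).add (h1.const_mul b)
    refine h2.congr_deriv ?_
    have hfac : (Nat.factorial (j + 1) : ℝ) ≠ 0 := by positivity
    have hj : (j : ℝ) + 2 ≠ 0 := by positivity
    have hj' : (j : ℝ) + 1 + 1 ≠ 0 := by positivity
    simp only [logPrimitive, hbc, Pi.neg_apply]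
    rw [Nat.factorial_succ (j + 1)]
    push_cast
    rw [show (j : ℝ) + 1 + 1 = j + 2 by ring]
    field_simp
    ring
  by_cases hx : x = 0
  · subst hx
    exact hasDerivAt_of_hasDerivAt_of_ne hne (logPrimitive_continuous _ _).continuousAt
      (logPrimitive_continuous _ _).continuousAt
  · exact hne x hx


/-- Example 1, smoothness and derivatives: With `β₀ = 0`,
`β_j = (1/(j+1))(β_{j-1} + 1/(j+1)!)` for `j = 1,…,k`, `T ∈ (0,1]`, and
`f(x) = -(x^{k+1}/(k+1)!) ln x + β_k x^{k+1}` for `x ∈ (0,T]`, `f(0) = 0`: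
`f` is `C^k` on `[0,T]`, `f^{(j)}(0) = 0` for `j = 0,…,k`, and `f^{(k)}(x) = -x ln x`
on `(0,T]`. -/
theorem example_one_derivatives
    (k : ℕ) (hk : 2 ≤ k)
    (B : ℕ → ℝ) (hB0 : B 0 = 0)
    (hBrec : ∀ j : ℕ, 1 ≤ j → j ≤ k →
      B j = (1 / ((j : ℝ) + 1)) * (B (j - 1) + 1 / (Nat.factorial (j + 1) : ℝ)))
    (T : ℝ) (hT : T ∈ Set.Ioc (0 : ℝ) 1)
    (f : ℝ → ℝ)
    (hfpos : ∀ x ∈ Set.Ioc 0 T,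
      f x = -(x ^ (k + 1) / (Nat.factorial (k + 1) : ℝ)) * Real.log x + B k * x ^ (k + 1))
    (hf0 : f 0 = 0) :
    ContDiffOn ℝ k f (Set.Icc 0 T) ∧
    (∀ j : ℕ, j ≤ k → iteratedDerivWithin j f (Set.Icc 0 T) 0 = 0) ∧
    (∀ x ∈ Set.Ioc 0 T, iteratedDerivWithin k f (Set.Icc 0 T) x = -x * Real.log x) := by
  have hT0 : (0 : ℝ) < T := hT.1
  have hs : UniqueDiffOn ℝ (Set.Icc 0 T) := uniqueDiffOn_Icc hT0
  have h0 : (0 : ℝ) ∈ Set.Icc 0 T := ⟨le_rfl, hT0.le⟩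
  have hrec : ∀ i : ℕ, i + 1 ≤ k →
      B (i + 1) = (1 / ((i : ℝ) + 2)) * (B i + 1 / (Nat.factorial (i + 2) : ℝ)) := by
    intro i hi
    rw [hBrec (i + 1) (by omega) hi]
    push_cast
    rw [show (i : ℝ) + 1 + 1 = i + 2 by ring]
  have hder : ∀ i j : ℕ, i + j = k → ∀ x ∈ Set.Icc 0 T,
      iteratedDerivWithin j f (Set.Icc 0 T) x = logPrimitive (B i) i x := by
    intro i j
    induction j generalizing i with
    | zero =>
      intro hij x hx
      obtain rfl : i = k := by omega
      rw [iteratedDerivWithin_zero]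
      rcases hx.1.eq_or_lt with h | h
      · rw [← h, hf0, logPrimitive_zero]
      · exact hfpos x ⟨h, hx.2⟩
    | succ j ih =>
      intro hij x hx
      have hprev := ih (i + 1) (by omega)
      rw [iteratedDerivWithin_succ]
      exact ((logPrimitive_hasDerivAt (hrec i (by omega)) x).hasDerivWithinAt.congr hprev (hprev x hx)).derivWithin
        (hs x hx)
  refine ⟨?_, ?_, ?_⟩
  · apply contDiffOn_of_continuousOn_differentiableOn_deriv
    · intro m hm
      have hm' : m ≤ k := by exact_mod_cast hm
      exact (logPrimitive_continuous _ _).continuousOn.congr (hder (k - m) m (by omega))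
    · intro m hm
      have hm' : m < k := by exact_mod_cast hm
      obtain ⟨i, rfl⟩ : ∃ i, k = i + 1 + m := ⟨k - m - 1, by omega⟩
      intro x hx
      exact (logPrimitive_hasDerivAt (hrec i (by omega)) x).differentiableAt.differentiableWithinAt.congr
        (hder (i + 1) m rfl) (hder (i + 1) m rfl x hx)
  · intro j hj
    rw [hder (k - j) j (by omega) 0 h0, logPrimitive_zero]
  · intro x hx
    rw [hder 0 k (by omega) x ⟨hx.1.le, hx.2⟩]
    simp [logPrimitive, hB0]
end

section
/- Let k ≥ 2 be an integer, α ∈ (0,1), define β₀ = 0 and β_j = (1/(j+1))(β_{j−1} + 1/(j+1)!) for j = 1, …, k, let T ∈ (0,1], and define f : [0,T] → ℝ by f(x) = −(x^{k+1}/(k+1)!) ln x + β_k x^{k+1} for x ∈ (0,T] and f(0) = 0, so that f^{(k)}(x) = −x ln x. Then the quotient N(0,y)/D(0,y) is continuous on (0,T] and N(0,y)/D(0,y) → 0 as y → 0⁺. -/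
/-!
For `y > 0` the identity `-(s y) ln (s y) = y (-s ln s) + s (-y ln y)` gives
`∫₀¹ (1 - s)^m (-(s y) ln (s y)) ds = y (a_m (-ln y) + b_m)` with the moments
`a_m = ∫₀¹ (1 - s)^m s ds` and `b_m = ∫₀¹ (1 - s)^m (-s ln s) ds`, both positive
(`integral_eq`, `momentA_pos`, `momentB_pos`). With `p = (k + α - 1) / (k + α)` the quotient is
therefore `y^k (a (-ln y) + b) / (y^(k+1) (c (-ln y) + d))^p` for `0 < y ≤ 1`, where `a, b` are the
moments for `m = k - 2` and `c, d` those for `m = k - 1`. The base of the power is positive, so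
this is continuous. Bounding `c (-ln y) + d` below by `d > 0`, the quotient is at most
`y^ε (a (-ln y) + b) / d^p` with `ε = k - (k + 1) p = (1 - α) / (k + α) > 0`, and
`y^ε ln y → 0` as `y → 0⁺`.
-/

/-- The moment `∫₀¹ (1 - s)^m s ds`, the coefficient of `-ln y`. -/
noncomputable def momentA (m : ℕ) : ℝ := ∫ s in (0:ℝ)..1, (1 - s) ^ m * s

/-- The moment `∫₀¹ (1 - s)^m (-s ln s) ds`, the term without `ln y`. -/
noncomputable def momentB (m : ℕ) : ℝ := ∫ s in (0:ℝ)..1, (1 - s) ^ m * Real.negMulLog s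

lemma momentA_pos (m : ℕ) : 0 < momentA m := by
  refine intervalIntegral.intervalIntegral_pos_of_pos_on ?_ ?_ one_pos
  · exact Continuous.intervalIntegrable (by fun_prop) _ _
  · intro s hs
    exact mul_pos (pow_pos (sub_pos.2 hs.2) _) hs.1

lemma momentB_pos (m : ℕ) : 0 < momentB m := by
  refine intervalIntegral.intervalIntegral_pos_of_pos_on ?_ ?_ one_pos
  · exact Continuous.intervalIntegrable (by fun_prop) _ _
  · intro s hs
    refine mul_pos (pow_pos (sub_pos.2 hs.2) _) ?_
    have := mul_pos hs.1 (neg_pos.2 (Real.log_neg hs.1 hs.2))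
    rw [Real.negMulLog]
    linarith

lemma integral_eq (m : ℕ) (y : ℝ) :
    ∫ s in (0:ℝ)..1, (1 - s) ^ m * (-(s * y) * Real.log (s * y))
      = y * (momentA m * (-Real.log y) + momentB m) := by
  have h : ∀ s : ℝ, (1 - s) ^ m * (-(s * y) * Real.log (s * y))
      = y * ((1 - s) ^ m * Real.negMulLog s) + Real.negMulLog y * ((1 - s) ^ m * s) := by
    intro s
    have := Real.negMulLog_mul s y
    rw [Real.negMulLog] at this
    rw [this]
    ring
  simp_rw [h]
  rw [intervalIntegral.integral_add, intervalIntegral.integral_const_mul,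
    intervalIntegral.integral_const_mul]
  · change y * momentB m + Real.negMulLog y * momentA m = _
    rw [Real.negMulLog]
    ring
  · exact Continuous.intervalIntegrable (by fun_prop) _ _
  · exact Continuous.intervalIntegrable (by fun_prop) _ _

/-- The numerator and the base of the power in the denominator are positive on `(0,1]`,
the right endpoint included because
`momentB m` is strictly positive. -/
lemma base_pos (k m : ℕ) {y : ℝ} (h0 : 0 < y) (h1 : y ≤ 1) :
    0 < y ^ k * (y * (momentA m * (-Real.log y) + momentB m)) := by
  have hl : 0 ≤ -Real.log y := neg_nonneg.2 (Real.log_nonpos h0.le h1)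
  have := momentA_pos m
  have := momentB_pos m
  positivity

lemma tendsto_majorant {ε : ℝ} (hε : 0 < ε) (a b C : ℝ) :
    Filter.Tendsto (fun y : ℝ => y ^ ε * (a * (-Real.log y) + b) / C)
      (nhdsWithin 0 (Set.Ioi 0)) (nhds 0) := by
  have h1 := tendsto_log_mul_rpow_nhdsGT_zero hε
  have h2 : Filter.Tendsto (fun y : ℝ => y ^ ε) (nhdsWithin 0 (Set.Ioi 0)) (nhds 0) := by
    have := (Real.continuousAt_rpow_const 0 ε (Or.inr hε.le)).tendsto
    rw [Real.zero_rpow hε.ne'] at this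
    exact this.mono_left nhdsWithin_le_nhds
  have h3 := ((h1.const_mul (-a)).add (h2.const_mul b)).div_const C
  simp only [mul_zero, add_zero, zero_div] at h3
  refine h3.congr fun y => ?_
  ring


/-- Example 1, behaviour of `N/D`: For the function `f` of Example 1,
with `f^{(k)}(x) = -x ln x`, the quotient `N(0,y)/D(0,y)` is continuous on `(0,T]` and
tends to `0` as `y → 0⁺`. -/
theorem example_one_ND_tendsto_zero
    (k : ℕ) (hk : 2 ≤ k) (α : ℝ) (hα : α ∈ Set.Ioo (0 : ℝ) 1)
    (B : ℕ → ℝ) (hB0 : B 0 = 0)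
    (hBrec : ∀ j : ℕ, 1 ≤ j → j ≤ k →
      B j = (1 / ((j : ℝ) + 1)) * (B (j - 1) + 1 / (Nat.factorial (j + 1) : ℝ)))
    (T : ℝ) (hT : T ∈ Set.Ioc (0 : ℝ) 1)
    (f : ℝ → ℝ)
    (hfpos : ∀ x ∈ Set.Ioc 0 T,
      f x = -(x ^ (k + 1) / (Nat.factorial (k + 1) : ℝ)) * Real.log x + B k * x ^ (k + 1))
    (hf0 : f 0 = 0)
    (hfk : ∀ x ∈ Set.Ioc 0 T, iteratedDerivWithin k f (Set.Icc 0 T) x = -x * Real.log x) :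
    ContinuousOn (fun y =>
      (y ^ (k - 1) * ∫ s in (0:ℝ)..1, (1 - s) ^ (k - 2) * (-(s * y) * Real.log (s * y))) /
        ((y ^ k * ∫ s in (0:ℝ)..1, (1 - s) ^ (k - 1) * (-(s * y) * Real.log (s * y)))
          ^ (((k : ℝ) + α - 1) / ((k : ℝ) + α)))) (Set.Ioc 0 T) ∧
    Filter.Tendsto (fun y =>
      (y ^ (k - 1) * ∫ s in (0:ℝ)..1, (1 - s) ^ (k - 2) * (-(s * y) * Real.log (s * y))) /
        ((y ^ k * ∫ s in (0:ℝ)..1, (1 - s) ^ (k - 1) * (-(s * y) * Real.log (s * y)))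
          ^ (((k : ℝ) + α - 1) / ((k : ℝ) + α))))
      (nhdsWithin 0 (Set.Ioi 0)) (nhds 0) := by
  obtain ⟨hα0, hα1⟩ := hα
  simp_rw [integral_eq]
  have hk2 : (2:ℝ) ≤ k := by exact_mod_cast hk
  have hkα : 0 < (k:ℝ) + α := by linarith
  set p : ℝ := ((k:ℝ) + α - 1) / (k + α) with hp
  have hp0 : 0 ≤ p := div_nonneg (by linarith) hkα.le
  refine ⟨?_, ?_⟩
  · have hlog : ContinuousOn Real.log (Set.Ioc 0 T) :=
      Real.continuousOn_log.mono fun y hy => hy.1.ne'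
    have hbase : ∀ y ∈ Set.Ioc 0 T,
        0 < y ^ k * (y * (momentA (k - 1) * (-Real.log y) + momentB (k - 1))) :=
      fun y hy => base_pos k (k - 1) hy.1 (hy.2.trans hT.2)
    refine ContinuousOn.div (by fun_prop) ?_ fun y hy => (Real.rpow_pos_of_pos (hbase y hy) p).ne'
    exact ContinuousOn.rpow_const (by fun_prop) fun y hy => Or.inl (hbase y hy).ne'
  · have ha := momentA_pos (k - 2)
    have hb := momentB_pos (k - 2)
    have hc := momentA_pos (k - 1)
    have hd := momentB_pos (k - 1)
    have hε : 0 < (k:ℝ) - (k + 1) * p := by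
      have : (k:ℝ) - (k + 1) * p = (1 - α) / (k + α) := by
        rw [hp]
        field_simp
        ring
      rw [this]
      exact div_pos (by linarith) hkα
    have hmem : ∀ᶠ y : ℝ in nhdsWithin 0 (Set.Ioi 0), y ∈ Set.Ioo (0:ℝ) 1 :=
      Ioo_mem_nhdsGT one_pos
    refine squeeze_zero' ?_ ?_
      (tendsto_majorant hε (momentA (k - 2)) (momentB (k - 2)) (momentB (k - 1) ^ p))
    · filter_upwards [hmem] with y hy
      exact div_nonneg (base_pos (k - 1) (k - 2) hy.1 hy.2.le).le
        (Real.rpow_nonneg (base_pos k (k - 1) hy.1 hy.2.le).le p)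
    · filter_upwards [hmem] with y hy
      have hy0 : 0 < y := hy.1
      have hl : 0 ≤ -Real.log y := neg_nonneg.2 (Real.log_nonpos hy0.le hy.2.le)
      have hlow : (y ^ (k + 1) * momentB (k - 1)) ^ p
          ≤ (y ^ k * (y * (momentA (k - 1) * (-Real.log y) + momentB (k - 1)))) ^ p := by
        refine Real.rpow_le_rpow (by positivity) ?_ hp0
        rw [pow_succ, mul_assoc]
        gcongr
        have := mul_nonneg hc.le hl
        linarith
      have hpk : y ^ (k - 1) * y = y ^ k := by
        rw [← pow_succ, Nat.sub_add_cancel (by omega)]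
      have hpow : y ^ k = y ^ ((k:ℝ) - (k + 1) * p) * (y ^ (k + 1)) ^ p := by
        rw [← Real.rpow_natCast y (k + 1), ← Real.rpow_mul hy0.le, ← Real.rpow_add hy0,
          ← Real.rpow_natCast]
        congr 1
        push_cast
        ring
      calc _ ≤ y ^ (k - 1) * (y * (momentA (k - 2) * (-Real.log y) + momentB (k - 2)))
            / (y ^ (k + 1) * momentB (k - 1)) ^ p :=
            div_le_div_of_nonneg_left (by positivity) (by positivity) hlow
        _ = _ := by
            have hq : 0 < (y ^ (k + 1)) ^ p := by positivity
            rw [← mul_assoc, hpk, hpow, Real.mul_rpow (by positivity) hd.le]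
            field_simp
end

section
/- Let T > 0, k ≥ 2 an integer, α ∈ (0,1], and let g ∈ C^{k,α}[0,T]. Define f(x) = x^{k+α} g(x) for x ∈ [0,T]. Then f ∈ C^{k,α}[0,T] and f^{(j)}(0) = 0 for j = 0, 1, …, k. -/
/-!
Write `f = p * g` with `p x = x ^ (k + α)`. Since `k ≤ k + α`, `p` is `C^k` on `ℝ`, and its
derivatives `p⁽ʲ⁾ x = c_j x ^ (k + α - j)`, `j ≤ k`, all vanish at `0` because the exponent stays
positive; moreover `p⁽ᵏ⁾` is a multiple of `x ^ α`, hence `α`-Hölder (`isHolderOn_rpow`).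
On `[0, T]`, a `C^k` function with `α`-Hölder `k`-th derivative has all its derivatives of
order `≤ k` `α`-Hölder (`isHolderOn_iteratedDerivWithin`), the lower ones being Lipschitz. The Leibniz
formula expresses `f⁽ʲ⁾` as a sum of products `p⁽ⁱ⁾ g⁽ʲ⁻ⁱ⁾`, and sums and products of Hölder
functions on a bounded interval are Hölder, which gives the regularity; evaluating the same formula
at `0` gives the vanishing.
-/

open Set

/-- `u` is `α`-Hölder on `[0, T]`, with an unspecified real constant. For `α ≥ 0` this
is Mathlib's `HolderOnWith`, up to the choice of constant, phrased with absolute values. -/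
def IsHolderOn (T α : ℝ) (u : ℝ → ℝ) : Prop :=
  ∃ C : ℝ, ∀ x ∈ Icc 0 T, ∀ y ∈ Icc 0 T, |u x - u y| ≤ C * |x - y| ^ α

namespace IsHolderOn

variable {T α : ℝ} {u v : ℝ → ℝ}

lemma congr (hu : IsHolderOn T α u) (h : EqOn v u (Icc 0 T)) : IsHolderOn T α v := by
  obtain ⟨C, hC⟩ := hu
  refine ⟨C, fun x hx y hy => ?_⟩
  rw [h hx, h hy]
  exact hC x hx y hy

lemma const (c : ℝ) : IsHolderOn T α (fun _ => c) := ⟨0, by simp⟩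

lemma add (hu : IsHolderOn T α u) (hv : IsHolderOn T α v) :
    IsHolderOn T α (fun x => u x + v x) := by
  obtain ⟨C, hC⟩ := hu
  obtain ⟨D, hD⟩ := hv
  refine ⟨C + D, fun x hx y hy => ?_⟩
  calc |u x + v x - (u y + v y)| = |(u x - u y) + (v x - v y)| := by ring_nf
    _ ≤ |u x - u y| + |v x - v y| := abs_add_le _ _
    _ ≤ (C + D) * |x - y| ^ α := by linarith [hC x hx y hy, hD x hx y hy]

lemma sum {ι : Type*} (s : Finset ι) {w : ι → ℝ → ℝ} (h : ∀ i ∈ s, IsHolderOn T α (w i)) :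
    IsHolderOn T α (fun x => ∑ i ∈ s, w i x) := by
  classical
  induction s using Finset.induction_on with
  | empty => simpa using const 0
  | insert i s hi ih =>
    simp only [Finset.sum_insert hi]
    exact (h i (Finset.mem_insert_self i s)).add
      (ih fun j hj => h j (Finset.mem_insert_of_mem hj))

/-- A Hölder function on `[0, T]` is bounded, by comparison with its value at `0`. -/
lemma bounded (hα : 0 ≤ α) (hu : IsHolderOn T α u) : ∃ M : ℝ, ∀ x ∈ Icc 0 T, |u x| ≤ M := by
  obtain ⟨C, hC⟩ := hu
  refine ⟨|u 0| + |C| * T ^ α, fun x hx => ?_⟩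
  have hT : (0 : ℝ) ≤ T := hx.1.trans hx.2
  have h1 := hC x hx 0 ⟨le_rfl, hT⟩
  have h2 : C * |x - 0| ^ α ≤ |C| * T ^ α := by
    rw [sub_zero, abs_of_nonneg hx.1]
    exact mul_le_mul (le_abs_self C) (Real.rpow_le_rpow hx.1 hx.2 hα)
      (Real.rpow_nonneg hx.1 _) (abs_nonneg C)
  have h3 := abs_sub_abs_le_abs_sub (u x) (u 0)
  linarith

lemma mul (hα : 0 ≤ α) (hu : IsHolderOn T α u) (hv : IsHolderOn T α v) :
    IsHolderOn T α (fun x => u x * v x) := by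
  obtain ⟨M, hM⟩ := hu.bounded hα
  obtain ⟨N, hN⟩ := hv.bounded hα
  obtain ⟨C, hC⟩ := hu
  obtain ⟨D, hD⟩ := hv
  refine ⟨M * D + N * C, fun x hx y hy => ?_⟩
  have hM0 : 0 ≤ M := (abs_nonneg _).trans (hM x hx)
  have hN0 : 0 ≤ N := (abs_nonneg _).trans (hN x hx)
  calc |u x * v x - u y * v y| = |u x * (v x - v y) + v y * (u x - u y)| := by ring_nf
    _ ≤ |u x| * |v x - v y| + |v y| * |u x - u y| := by
      rw [← abs_mul, ← abs_mul]
      exact abs_add_le _ _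
    _ ≤ M * (D * |x - y| ^ α) + N * (C * |x - y| ^ α) :=
      add_le_add (mul_le_mul (hM x hx) (hD x hx y hy) (abs_nonneg _) hM0)
        (mul_le_mul (hN y hy) (hC x hx y hy) (abs_nonneg _) hN0)
    _ = (M * D + N * C) * |x - y| ^ α := by ring

/-- A Lipschitz function on `[0, T]` is `α`-Hölder, as `|x - y| ≤ T ^ (1 - α) * |x - y| ^ α`. -/
lemma of_lipschitz (hα1 : α ≤ 1) {C : ℝ}
    (h : ∀ x ∈ Icc 0 T, ∀ y ∈ Icc 0 T, |u x - u y| ≤ C * |x - y|) : IsHolderOn T α u := by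
  refine ⟨|C| * T ^ (1 - α), fun x hx y hy => (h x hx y hy).trans ?_⟩
  have hxy : |x - y| ≤ T := abs_sub_le_iff.2 ⟨by linarith [hx.2, hy.1], by linarith [hx.1, hy.2]⟩
  have hsplit : |x - y| = |x - y| ^ (1 - α) * |x - y| ^ α := by
    rw [← Real.rpow_add' (abs_nonneg _) (by norm_num)]
    simp
  calc C * |x - y| ≤ |C| * |x - y| := by gcongr; exact le_abs_self C
    _ = |C| * (|x - y| ^ (1 - α) * |x - y| ^ α) := by rw [← hsplit]
    _ ≤ |C| * (T ^ (1 - α) * |x - y| ^ α) := by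
      gcongr
    _ = |C| * T ^ (1 - α) * |x - y| ^ α := by ring

end IsHolderOn

/-- Subadditivity of `t ↦ t ^ α` gives the Hölder bound with constant `1`. -/
lemma isHolderOn_rpow {T α : ℝ} (hα : α ∈ Ioc (0 : ℝ) 1) : IsHolderOn T α (fun x => x ^ α) := by
  have key : ∀ x y : ℝ, 0 ≤ y → y ≤ x → |x ^ α - y ^ α| ≤ |x - y| ^ α := by
    intro x y hy hyx
    have h1 := Real.rpow_add_le_add_rpow hy (sub_nonneg.2 hyx) hα.1.le hα.2
    rw [add_sub_cancel] at h1
    rw [abs_of_nonneg (sub_nonneg.2 hyx),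
      abs_of_nonneg (sub_nonneg.2 (Real.rpow_le_rpow hy hyx hα.1.le))]
    linarith
  refine ⟨1, fun x hx y hy => ?_⟩
  rw [one_mul]
  rcases le_total y x with h | h
  · exact key x y hy.1 h
  · rw [abs_sub_comm, abs_sub_comm x y]
    exact key y x hx.1 h

/-- In `C^{k,α}[0, T]` every derivative of order at most `k` is `α`-Hölder: below order `k` the
next derivative is continuous, hence bounded, so the mean value inequality applies. -/
lemma isHolderOn_iteratedDerivWithin {T α : ℝ} (hT : 0 < T) (hα1 : α ≤ 1) {k : ℕ} {u : ℝ → ℝ}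
    (hu : ContDiffOn ℝ k u (Icc 0 T))
    (hk : IsHolderOn T α (iteratedDerivWithin k u (Icc 0 T))) {j : ℕ} (hj : j ≤ k) :
    IsHolderOn T α (iteratedDerivWithin j u (Icc 0 T)) := by
  rcases hj.eq_or_lt with rfl | hlt
  · exact hk
  have hs : UniqueDiffOn ℝ (Icc (0 : ℝ) T) := uniqueDiffOn_Icc hT
  have hd := hu.differentiableOn_iteratedDerivWithin (m := j) (by exact_mod_cast hlt) hs
  have hc := hu.continuousOn_iteratedDerivWithin (m := j + 1) (by exact_mod_cast hlt) hs
  obtain ⟨M, hM⟩ := isCompact_Icc.exists_bound_of_continuousOn hc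
  rw [iteratedDerivWithin_succ] at hM
  exact IsHolderOn.of_lipschitz hα1 fun x hx y hy =>
    (convex_Icc 0 T).norm_image_sub_le_of_norm_derivWithin_le hd hM hy hx

lemma iteratedDerivWithin_rpow {T : ℝ} (hT : 0 < T) {r : ℝ} {j : ℕ} (hj : (j : ℝ) ≤ r) {x : ℝ}
    (hx : x ∈ Icc 0 T) :
    iteratedDerivWithin j (fun x : ℝ => x ^ r) (Icc 0 T) x =
      (descPochhammer ℝ j).eval r * x ^ (r - j) := by
  rw [iteratedDerivWithin_eq_iteratedDeriv (uniqueDiffOn_Icc hT)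
    (Real.contDiff_rpow_const_of_le hj).contDiffAt hx, iteratedDeriv_eq_iterate,
    Real.iter_deriv_rpow_const]

/-- Example 2, regularity: If `g ∈ C^{k,α}[0,T]` and
`f(x) = x^{k+α} g(x)`, then `f ∈ C^{k,α}[0,T]` and `f^{(j)}(0) = 0` for `j = 0,…,k`. -/
theorem example_two_regularity
    (T : ℝ) (hT : 0 < T) (k : ℕ) (hk : 2 ≤ k) (α : ℝ) (hα : α ∈ Set.Ioc (0 : ℝ) 1)
    (g : ℝ → ℝ)
    (hg : ContDiffOn ℝ k g (Set.Icc 0 T))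
    (hgHolder : ∃ C : ℝ, ∀ x ∈ Set.Icc 0 T, ∀ y ∈ Set.Icc 0 T,
      |iteratedDerivWithin k g (Set.Icc 0 T) x - iteratedDerivWithin k g (Set.Icc 0 T) y|
        ≤ C * |x - y| ^ α) :
    ContDiffOn ℝ k (fun x => x ^ ((k : ℝ) + α) * g x) (Set.Icc 0 T) ∧
    (∃ C : ℝ, ∀ x ∈ Set.Icc 0 T, ∀ y ∈ Set.Icc 0 T,
      |iteratedDerivWithin k (fun x => x ^ ((k : ℝ) + α) * g x) (Set.Icc 0 T) x -
        iteratedDerivWithin k (fun x => x ^ ((k : ℝ) + α) * g x) (Set.Icc 0 T) y|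
          ≤ C * |x - y| ^ α) ∧
    (∀ j : ℕ, j ≤ k →
      iteratedDerivWithin j (fun x => x ^ ((k : ℝ) + α) * g x) (Set.Icc 0 T) 0 = 0) := by

  have hs : UniqueDiffOn ℝ (Icc (0 : ℝ) T) := uniqueDiffOn_Icc hT
  have hp : ContDiffOn ℝ k (fun x : ℝ => x ^ ((k : ℝ) + α)) (Icc 0 T) :=
    (Real.contDiff_rpow_const_of_le (by linarith [hα.1])).contDiffOn
  have hpk : IsHolderOn T α
      (iteratedDerivWithin k (fun x : ℝ => x ^ ((k : ℝ) + α)) (Icc 0 T)) := by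
    refine ((IsHolderOn.const ((descPochhammer ℝ k).eval ((k : ℝ) + α))).mul hα.1.le
      (isHolderOn_rpow hα)).congr fun x hx => ?_
    rw [iteratedDerivWithin_rpow hT (by linarith [hα.1]) hx, add_sub_cancel_left]
  have leibniz : ∀ j ≤ k, ∀ x ∈ Icc 0 T,
      iteratedDerivWithin j (fun x => x ^ ((k : ℝ) + α) * g x) (Icc 0 T) x =
        ∑ i ∈ Finset.range (j + 1), (j.choose i : ℝ) *
          iteratedDerivWithin i (fun x : ℝ => x ^ ((k : ℝ) + α)) (Icc 0 T) x *
          iteratedDerivWithin (j - i) g (Icc 0 T) x := fun j hj x hx =>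
    iteratedDerivWithin_mul hx hs ((hp x hx).of_le (by exact_mod_cast hj))
      ((hg x hx).of_le (by exact_mod_cast hj))
  refine ⟨hp.mul hg, ?_, fun j hj => ?_⟩
  · refine IsHolderOn.congr (IsHolderOn.sum _ fun i hi => ?_) (leibniz k le_rfl)
    have hik : i ≤ k := Nat.lt_succ_iff.1 (Finset.mem_range.1 hi)
    exact ((IsHolderOn.const _).mul hα.1.le
      (isHolderOn_iteratedDerivWithin hT hα.2 hp hpk hik)).mul hα.1.le
      (isHolderOn_iteratedDerivWithin hT hα.2 hg hgHolder (Nat.sub_le k i))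
  · have h0 : (0 : ℝ) ∈ Icc 0 T := ⟨le_rfl, hT.le⟩
    rw [leibniz j hj 0 h0]
    refine Finset.sum_eq_zero fun i hi => ?_
    have hik : (i : ℝ) ≤ k := by
      exact_mod_cast (Nat.lt_succ_iff.1 (Finset.mem_range.1 hi)).trans hj
    rw [iteratedDerivWithin_rpow hT (by linarith [hα.1]) h0,
      Real.zero_rpow (by linarith [hα.1] : (0 : ℝ) < k + α - i).ne']
    simp
end

section
/- Let T > 0, k ≥ 2 an integer, α ∈ (0,1], and let g ∈ C^{k,α}[0,T] with g > 0 on (0,T] and g(0) ≠ 0. Define f(x) = x^{k+α} g(x) for x ∈ [0,T]. Then the quotient N(0,y)/D(0,y) is continuous on (0,T] and converges, as y → 0⁺, to a limit l > 0. -/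
/-!
Put `f x = x ^ (k + α) * g x`. The functions `f` and `f'` vanish at `0` together with their
derivatives of order up to `k - 1` and `k - 2`, so Taylor's formula with integral remainder
(`taylor_unit_interval`) identifies the two integral expressions as `(k - 2)! * f' y` and
`(k - 1)! * f y`. Since `f' y = y ^ (k + α - 1) * ((k + α) * g y + y * g' y)`
(`derivWithin_rpow_mul`) and `f y ^ ((k + α - 1) / (k + α))` carries the same power of `y`, the
powers cancel: on `(0, T]` the quotient equals

  `(k - 2)! * ((k + α) * g y + y * g' y) / ((k - 1)! * g y) ^ ((k + α - 1) / (k + α))`.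

This expression is continuous on all of `[0, T]`, because `g > 0` there (`g 0 > 0` by continuity
and `g 0 ≠ 0`), and its value at `0` is positive.
-/

open Set Filter Topology

theorem derivWithin_rpow_mul {T : ℝ} (hT : 0 < T) {p : ℝ} (hp : 1 < p) {g : ℝ → ℝ}
    (hg : DifferentiableOn ℝ g (Icc 0 T)) {x : ℝ} (hx : x ∈ Icc 0 T) :
    derivWithin (fun x => x ^ p * g x) (Icc 0 T) x
      = x ^ (p - 1) * (p * g x + x * derivWithin g (Icc 0 T) x) := by
  have h1 : HasDerivWithinAt (fun x : ℝ => x ^ p) (p * x ^ (p - 1)) (Icc 0 T) x :=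
    (Real.hasDerivAt_rpow_const (Or.inr hp.le)).hasDerivWithinAt
  have h2 := (h1.mul (hg x hx).hasDerivWithinAt).derivWithin (uniqueDiffOn_Icc hT x hx)
  have h3 : x ^ p = x ^ (p - 1) * x := by
    rw [← Real.rpow_add_one' hx.1 (by linarith)]
    congr 1
    ring
  refine Eq.trans h2 ?_
  rw [h3]
  ring

/-- Induction on the order: one derivative turns `x ^ p * g x` into a function of the same shape,
with exponent `p - 1` and one degree of smoothness less. -/
theorem iteratedDerivWithin_rpow_mul_zero {T : ℝ} (hT : 0 < T) (j : ℕ) :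
    ∀ (p : ℝ) (g : ℝ → ℝ), (j : ℝ) < p → ContDiffOn ℝ j g (Icc 0 T) →
      iteratedDerivWithin j (fun x => x ^ p * g x) (Icc 0 T) 0 = 0 := by
  have h0 : (0 : ℝ) ∈ Icc 0 T := ⟨le_rfl, hT.le⟩
  induction j with
  | zero =>
    intro p g hp _
    have hp' : p ≠ 0 := by
      rintro rfl
      simp at hp
    simp [Real.zero_rpow hp']
  | succ j ih =>
    intro p g hp hg
    push_cast at hp
    have hj : (0 : ℝ) ≤ j := j.cast_nonneg
    have hU := uniqueDiffOn_Icc hT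
    rw [iteratedDerivWithin_succ', iteratedDerivWithin_congr
      (fun x hx => derivWithin_rpow_mul hT (by linarith)
        (hg.differentiableOn (by simp)) hx) h0]
    refine ih (p - 1) _ (by linarith) ?_
    have hg' : ContDiffOn ℝ j (derivWithin g (Icc 0 T)) (Icc 0 T) :=
      hg.derivWithin hU (by norm_cast)
    exact (contDiffOn_const.mul (hg.of_le (by norm_cast; omega))).add (contDiffOn_id.mul hg')

/-- Taylor's formula with integral remainder at a point where the Taylor polynomial vanishes.
The derivatives are taken within the fixed interval `[0, T]` rather than within `[0, y]`. -/
theorem taylor_remainder_of_vanishing {T : ℝ} (hT : 0 < T) {F : ℝ → ℝ} {y : ℝ}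
    (hy : y ∈ Icc 0 T) (n : ℕ) (hF : ContDiffOn ℝ (n + 1 : ℕ) F (Icc 0 T))
    (h0 : ∀ j ≤ n, iteratedDerivWithin j F (Icc 0 T) 0 = 0) :
    ∫ t in (0 : ℝ)..y, (y - t) ^ n * iteratedDerivWithin (n + 1) F (Icc 0 T) t
      = (n.factorial : ℝ) * F y := by
  have hU := uniqueDiffOn_Icc hT
  have hsub : Icc 0 y ⊆ Icc 0 T := Icc_subset_Icc_right hy.2
  have hcont : ∀ j ≤ n + 1, ContinuousOn (iteratedDerivWithin j F (Icc 0 T)) (Icc 0 y) :=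
    fun j hj => (hF.continuousOn_iteratedDerivWithin (by exact_mod_cast hj) hU).mono hsub
  have hder : ∀ j ≤ n, ∀ x ∈ Ioo 0 y, HasDerivAt (iteratedDerivWithin j F (Icc 0 T))
      (iteratedDerivWithin (j + 1) F (Icc 0 T) x) x := by
    intro j hj x hx
    have hx' : x ∈ Icc 0 T := hsub ⟨hx.1.le, hx.2.le⟩
    have hd := hF.differentiableOn_iteratedDerivWithin (m := j) (by norm_cast; omega) hU x hx'
    rw [iteratedDerivWithin_succ]
    exact hd.hasDerivWithinAt.hasDerivAt (Icc_mem_nhds hx.1 (hx.2.trans_le hy.2))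
  induction n with
  | zero =>
    have h := intervalIntegral.integral_eq_sub_of_hasDerivAt_of_le hy.1 (hcont 0 (by omega))
      (hder 0 le_rfl) ((hcont 1 (by omega)).intervalIntegrable_of_Icc hy.1)
    have h00 := h0 0 le_rfl
    simp only [iteratedDerivWithin_zero] at h h00
    simpa [h00] using h
  | succ n ih =>
    have ih' := ih (hF.of_le (by norm_cast; omega)) (fun j hj => h0 j (by omega))
      (fun j hj => hcont j (by omega)) (fun j hj => hder j (by omega))
    have hu : ∀ x : ℝ, HasDerivAt (fun t => (y - t) ^ (n + 1)) (-((n + 1 : ℝ) * (y - x) ^ n)) x := by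
      intro x
      have := ((hasDerivAt_id x).const_sub y).pow (n + 1)
      convert! this using 1
      simp
    have hmin : Ioo (min 0 y) (max 0 y) = Ioo 0 y := by
      rw [min_eq_left hy.1, max_eq_right hy.1]
    have h := intervalIntegral.integral_mul_deriv_eq_deriv_mul_of_hasDerivAt
      (a := 0) (b := y) (u := fun t => (y - t) ^ (n + 1))
      (u' := fun x => -((n + 1 : ℝ) * (y - x) ^ n))
      (v := iteratedDerivWithin (n + 1) F (Icc 0 T))
      (v' := iteratedDerivWithin (n + 1 + 1) F (Icc 0 T))
      (by fun_prop) (by rw [uIcc_of_le hy.1]; exact hcont _ (by omega))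
      (fun x _ => hu x) (by rw [hmin]; exact hder _ le_rfl)
      (Continuous.intervalIntegrable (by fun_prop) _ _)
      ((hcont _ le_rfl).intervalIntegrable_of_Icc hy.1)
    rw [h, h0 (n + 1) le_rfl]
    have : ∀ x, -((n + 1 : ℝ) * (y - x) ^ n) * iteratedDerivWithin (n + 1) F (Icc 0 T) x
        = -(n + 1 : ℝ) * ((y - x) ^ n * iteratedDerivWithin (n + 1) F (Icc 0 T) x) := by
      intro x
      ring
    simp only [this, intervalIntegral.integral_const_mul, ih', Nat.factorial_succ]
    push_cast
    simp
    ring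

theorem taylor_unit_interval {T : ℝ} (hT : 0 < T) {F : ℝ → ℝ} {y : ℝ}
    (hy : y ∈ Icc 0 T) (n : ℕ) (hF : ContDiffOn ℝ (n + 1 : ℕ) F (Icc 0 T))
    (h0 : ∀ j ≤ n, iteratedDerivWithin j F (Icc 0 T) 0 = 0) :
    y ^ (n + 1) * ∫ s in (0 : ℝ)..1, (1 - s) ^ n *
        iteratedDerivWithin (n + 1) F (Icc 0 T) (s * y)
      = (n.factorial : ℝ) * F y := by
  rw [← taylor_remainder_of_vanishing hT hy n hF h0]
  have h := intervalIntegral.mul_integral_comp_mul_right (a := 0) (b := 1)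
    (f := fun t => (y - t) ^ n * iteratedDerivWithin (n + 1) F (Icc 0 T) t) y
  simp only [zero_mul, one_mul] at h
  rw [← h, pow_succ', mul_assoc, ← intervalIntegral.integral_const_mul]
  congr 2
  ext s
  rw [show y - s * y = y * (1 - s) by ring, mul_pow]
  ring


/-- Example 2, positive limit case: If `g ∈ C^{k,α}[0,T]` with `g > 0` on
`(0,T]` and `g(0) ≠ 0`, and `f(x) = x^{k+α} g(x)`, then `N(0,y)/D(0,y)` is continuous on
`(0,T]` and converges as `y → 0⁺` to a limit `l > 0`. -/
theorem example_two_ND_pos_limit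
    (T : ℝ) (hT : 0 < T) (k : ℕ) (hk : 2 ≤ k) (α : ℝ) (hα : α ∈ Set.Ioc (0 : ℝ) 1)
    (g : ℝ → ℝ)
    (hg : ContDiffOn ℝ k g (Set.Icc 0 T))
    (hgHolder : ∃ C : ℝ, ∀ x ∈ Set.Icc 0 T, ∀ y ∈ Set.Icc 0 T,
      |iteratedDerivWithin k g (Set.Icc 0 T) x - iteratedDerivWithin k g (Set.Icc 0 T) y|
        ≤ C * |x - y| ^ α)
    (hgpos : ∀ x ∈ Set.Ioc 0 T, 0 < g x)
    (hg0 : g 0 ≠ 0) :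
    ContinuousOn (fun y =>
      (y ^ (k - 1) * ∫ s in (0:ℝ)..1, (1 - s) ^ (k - 2) *
        iteratedDerivWithin k (fun x => x ^ ((k : ℝ) + α) * g x) (Set.Icc 0 T) (s * y)) /
        ((y ^ k * ∫ s in (0:ℝ)..1, (1 - s) ^ (k - 1) *
          iteratedDerivWithin k (fun x => x ^ ((k : ℝ) + α) * g x) (Set.Icc 0 T) (s * y))
            ^ (((k : ℝ) + α - 1) / ((k : ℝ) + α)))) (Set.Ioc 0 T) ∧
    ∃ l : ℝ, 0 < l ∧
      Filter.Tendsto (fun y =>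
        (y ^ (k - 1) * ∫ s in (0:ℝ)..1, (1 - s) ^ (k - 2) *
          iteratedDerivWithin k (fun x => x ^ ((k : ℝ) + α) * g x) (Set.Icc 0 T) (s * y)) /
          ((y ^ k * ∫ s in (0:ℝ)..1, (1 - s) ^ (k - 1) *
            iteratedDerivWithin k (fun x => x ^ ((k : ℝ) + α) * g x) (Set.Icc 0 T) (s * y))
              ^ (((k : ℝ) + α - 1) / ((k : ℝ) + α))))
        (nhdsWithin 0 (Set.Ioi 0)) (nhds l) := by
  obtain ⟨n, rfl⟩ : ∃ n, k = n + 2 := ⟨k - 2, by omega⟩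
  have hα0 : 0 < α := hα.1
  have hn0 : (0 : ℝ) ≤ n := n.cast_nonneg
  have hcast : ((n + 2 : ℕ) : ℝ) = n + 2 := by push_cast; ring
  set p : ℝ := ((n + 2 : ℕ) : ℝ) + α with hp_def
  have hp1 : 1 < p := by rw [hp_def, hcast]; linarith
  have hp0 : 0 < p := by linarith
  have hU := uniqueDiffOn_Icc hT
  have hgd : DifferentiableOn ℝ g (Icc 0 T) := hg.differentiableOn (by simp)
  have hgc : ContinuousOn g (Icc 0 T) := hg.continuousOn
  have hg'c : ContinuousOn (derivWithin g (Icc 0 T)) (Icc 0 T) :=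
    hg.continuousOn_derivWithin hU (by norm_cast; omega)
  have h0T : (0 : ℝ) ∈ Icc 0 T := ⟨le_rfl, hT.le⟩
  have hIoc : 𝓝[Ioc 0 T] (0 : ℝ) = 𝓝[>] 0 := nhdsWithin_Ioc_eq_nhdsGT hT
  have hg0pos : 0 < g 0 := by
    refine lt_of_le_of_ne ?_ hg0.symm
    have ht : Tendsto g (𝓝[>] 0) (𝓝 (g 0)) := by
      rw [← hIoc]
      exact (hgc 0 h0T).mono_left (nhdsWithin_mono _ Ioc_subset_Icc_self)
    refine ge_of_tendsto ht ?_
    rw [← hIoc]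
    exact eventually_nhdsWithin_of_forall fun x hx => (hgpos x hx).le
  have hgpos' : ∀ x ∈ Icc 0 T, 0 < g x := by
    intro x hx
    rcases hx.1.eq_or_lt with h | h
    · rwa [← h]
    · exact hgpos x ⟨h, hx.2⟩
  set f : ℝ → ℝ := fun x => x ^ p * g x with hf_def
  have hf : ContDiffOn ℝ (n + 2 : ℕ) f (Icc 0 T) :=
    (Real.contDiff_rpow_const_of_le (n := n + 2) (by rw [hp_def]; linarith)).contDiffOn.mul hg
  have hf0 : ∀ j ≤ n + 1, iteratedDerivWithin j f (Icc 0 T) 0 = 0 := by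
    intro j hj
    refine iteratedDerivWithin_rpow_mul_zero hT j p g ?_ (hg.of_le (by norm_cast; omega))
    have : (j : ℝ) ≤ n + 1 := by exact_mod_cast hj
    rw [hp_def, hcast]
    linarith
  have hN : ∀ y ∈ Icc 0 T, y ^ (n + 1) * ∫ s in (0 : ℝ)..1, (1 - s) ^ n *
      iteratedDerivWithin (n + 2) f (Icc 0 T) (s * y)
        = (n.factorial : ℝ) * (y ^ (p - 1) * (p * g y + y * derivWithin g (Icc 0 T) y)) := by
    intro y hy
    have h := taylor_unit_interval hT hy n (F := derivWithin f (Icc 0 T))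
      (hf.derivWithin hU (by norm_cast))
      (fun j hj => by rw [← iteratedDerivWithin_succ']; exact hf0 _ (by omega))
    rw [← iteratedDerivWithin_succ', derivWithin_rpow_mul hT hp1 hgd hy] at h
    exact h
  have hD : ∀ y ∈ Icc 0 T, y ^ (n + 2) * ∫ s in (0 : ℝ)..1, (1 - s) ^ (n + 1) *
      iteratedDerivWithin (n + 2) f (Icc 0 T) (s * y)
        = ((n + 1).factorial : ℝ) * (y ^ p * g y) :=
    fun y hy => taylor_unit_interval hT hy (n + 1) hf hf0
  set Q : ℝ → ℝ := fun y => (n.factorial : ℝ) * (p * g y + y * derivWithin g (Icc 0 T) y) /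
    (((n + 1).factorial : ℝ) * g y) ^ ((p - 1) / p) with hQ_def
  have hbase : ∀ y ∈ Icc 0 T, 0 < ((n + 1).factorial : ℝ) * g y := fun y hy =>
    mul_pos (by exact_mod_cast (n + 1).factorial_pos) (hgpos' y hy)
  have hQc : ContinuousOn Q (Icc 0 T) := by
    refine ContinuousOn.div ?_ ?_ ?_
    · exact continuousOn_const.mul
        ((continuousOn_const.mul hgc).add (continuousOn_id.mul hg'c))
    · exact (continuousOn_const.mul hgc).rpow_const fun y hy => Or.inl (hbase y hy).ne'
    · exact fun y hy => (Real.rpow_pos_of_pos (hbase y hy) _).ne'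
  have hEq : EqOn (fun y =>
      (y ^ (n + 2 - 1) * ∫ s in (0:ℝ)..1, (1 - s) ^ (n + 2 - 2) *
        iteratedDerivWithin (n + 2) f (Icc 0 T) (s * y)) /
        ((y ^ (n + 2) * ∫ s in (0:ℝ)..1, (1 - s) ^ (n + 2 - 1) *
          iteratedDerivWithin (n + 2) f (Icc 0 T) (s * y)) ^ ((p - 1) / p))) Q (Ioc 0 T) := by
    intro y hy
    have hy' : y ∈ Icc 0 T := Ioc_subset_Icc_self hy
    have hN' := hN y hy'
    have hD' := hD y hy'
    simp only [show n + 2 - 1 = n + 1 from rfl, show n + 2 - 2 = n from rfl, hQ_def]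
    rw [hN', hD']
    have hyp : 0 < y ^ (p - 1) := Real.rpow_pos_of_pos hy.1 _
    have hpow : (((n + 1).factorial : ℝ) * (y ^ p * g y)) ^ ((p - 1) / p)
        = y ^ (p - 1) * (((n + 1).factorial : ℝ) * g y) ^ ((p - 1) / p) := by
      rw [show ((n + 1).factorial : ℝ) * (y ^ p * g y)
          = y ^ p * (((n + 1).factorial : ℝ) * g y) by ring,
        Real.mul_rpow (Real.rpow_nonneg hy.1.le _) (hbase y hy').le, ← Real.rpow_mul hy.1.le,
        mul_div_cancel₀ _ hp0.ne']
    rw [hpow, show (n.factorial : ℝ) * (y ^ (p - 1) * (p * g y + y * derivWithin g (Icc 0 T) y))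
        = y ^ (p - 1) * ((n.factorial : ℝ) * (p * g y + y * derivWithin g (Icc 0 T) y)) by ring,
      mul_div_mul_left _ _ hyp.ne']
  refine ⟨(hQc.mono Ioc_subset_Icc_self).congr hEq, Q 0, ?_, ?_⟩
  · refine div_pos (mul_pos (by exact_mod_cast n.factorial_pos) ?_)
      (Real.rpow_pos_of_pos (hbase 0 h0T) _)
    rw [zero_mul, add_zero]
    exact mul_pos hp0 hg0pos
  · rw [← hIoc]
    exact ((hQc 0 h0T).mono_left (nhdsWithin_mono _ Ioc_subset_Icc_self)).congr'
      (eventually_nhdsWithin_of_forall fun y hy => (hEq hy).symm)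
end
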